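/- arXiv:1604.00618 — 3 statements merged into one kernel-verified Lean document; each statement's English description precedes it below -/
import Mathlib

section
/- Let L be a locally compact Hausdorff topological space and let Y be a Banach space. If the pair (c₀, Y) has the BPBp for compact operators, then the pair (C₀(L), Y) has the BPBp for compact operators. -/
open MeasureTheory

noncomputable section

/-- A pair `(X, Y)` of normed spaces has the Bishop–Phelps–Bollobás property for compact
operators with the function `η`. -/
def BPBpCompactWith (𝕜 : Type*) [RCLike 𝕜] (X Y : Type*) [NormedAddCommGroup X]
    [NormedSpace 𝕜 X] [NormedAddCommGroup Y] [NormedSpace 𝕜 Y] (η : ℝ → ℝ) : Prop :=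
  ∀ ε : ℝ, 0 < ε → 0 < η ε ∧
    ∀ T : X →L[𝕜] Y, IsCompactOperator T → ‖T‖ = 1 →
      ∀ x₀ : X, ‖x₀‖ = 1 → 1 - η ε < ‖T x₀‖ →
        ∃ S : X →L[𝕜] Y, ∃ x₁ : X, IsCompactOperator S ∧ ‖S‖ = 1 ∧ ‖x₁‖ = 1 ∧
          ‖S x₁‖ = 1 ∧ ‖x₀ - x₁‖ < ε ∧ ‖S - T‖ < ε

/-- A pair `(X, Y)` has the Bishop–Phelps–Bollobás property for compact operators. -/
def BPBpCompact (𝕜 : Type*) [RCLike 𝕜] (X Y : Type*) [NormedAddCommGroup X]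
    [NormedSpace 𝕜 X] [NormedAddCommGroup Y] [NormedSpace 𝕜 Y] : Prop :=
  ∃ η : ℝ → ℝ, BPBpCompactWith 𝕜 X Y η

open scoped ZeroAtInfty CompactlySupported NNReal

lemma exists_mulReal {𝕜 : Type*} [RCLike 𝕜] {L : Type*} [TopologicalSpace L]
    (u : L → ℝ) (hu : Continuous u) (C : ℝ) (hb : ∀ x, |u x| ≤ C) (g : C₀(L, 𝕜)) :
    ∃ g' : C₀(L, 𝕜), ∀ x, g' x = (u x : 𝕜) * g x := by
  refine ⟨⟨⟨fun x => (u x : 𝕜) * g x, ?_⟩, ?_⟩, fun x => rfl⟩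
  · exact (RCLike.continuous_ofReal.comp hu).mul (map_continuous g)
  · have h := g.zero_at_infty'
    refine squeeze_zero_norm (a := fun x => C * ‖g x‖) (fun x => ?_) ?_
    · show ‖(u x : 𝕜) * g x‖ ≤ _
      rw [norm_mul, RCLike.norm_ofReal]
      exact mul_le_mul_of_nonneg_right (hb x) (norm_nonneg _)
    · have := (h.norm).const_mul C
      simpa using this

lemma c0_norm_le {𝕜 : Type*} [RCLike 𝕜] {L : Type*} [TopologicalSpace L]
    (g : C₀(L, 𝕜)) {C : ℝ} (hC : 0 ≤ C) (h : ∀ x, ‖g x‖ ≤ C) : ‖g‖ ≤ C := by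
  rw [← ZeroAtInftyContinuousMap.norm_toBCF_eq_norm]
  exact (BoundedContinuousFunction.norm_le hC).2 h

lemma c0_le_norm {𝕜 : Type*} [RCLike 𝕜] {L : Type*} [TopologicalSpace L]
    (g : C₀(L, 𝕜)) (x : L) : ‖g x‖ ≤ ‖g‖ := by
  rw [← ZeroAtInftyContinuousMap.norm_toBCF_eq_norm]
  exact g.toBCF.norm_coe_le_norm x

lemma exists_tv {𝕜 : Type*} [RCLike 𝕜] {L : Type*} [TopologicalSpace L]
    (φ : C₀(L, 𝕜) →L[𝕜] 𝕜) :
    ∃ Λ : C_c(L, ℝ≥0) →ₗ[ℝ≥0] ℝ≥0,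
      (∀ (f : C_c(L, ℝ≥0)) (g : C₀(L, 𝕜)), (∀ x, ‖g x‖ ≤ f x) → ‖φ g‖ ≤ Λ f) ∧
      (∀ f : C_c(L, ℝ≥0), (∀ x, f x ≤ 1) → (Λ f : ℝ) ≤ ‖φ‖) := by
  let S : C_c(L, ℝ≥0) → Set ℝ≥0 := fun f => {r | ∃ g : C₀(L, 𝕜), (∀ x, ‖g x‖ ≤ f x) ∧ r = ‖φ g‖₊}
  have hne : ∀ f, (S f).Nonempty := fun f => ⟨_, 0, by simp, rfl⟩
  have hbound : ∀ f (M : ℝ), 0 ≤ M → (∀ x, (f x : ℝ) ≤ M) → ∀ r ∈ S f, (r : ℝ) ≤ ‖φ‖ * M := by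
    rintro f M hM h r ⟨g, hg, rfl⟩
    refine (φ.le_opNorm g).trans ?_
    exact mul_le_mul_of_nonneg_left (c0_norm_le g hM fun x => (hg x).trans (h x)) (norm_nonneg _)
  have hbdd : ∀ f, BddAbove (S f) := by
    intro f
    obtain ⟨M, hM⟩ : ∃ M : ℝ, ∀ x, (f x : ℝ) ≤ M := by
      obtain ⟨M, hM⟩ := (f.hasCompactSupport.comp_left (g := fun r : ℝ≥0 => (r : ℝ))
        (by simp)).exists_bound_of_continuous (by fun_prop)
      exact ⟨M, fun x => (le_abs_self _).trans (hM x)⟩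
    refine ⟨Real.toNNReal (‖φ‖ * max M 0), fun r hr => ?_⟩
    exact NNReal.le_toNNReal_of_coe_le
      (hbound f _ (le_max_right _ _) (fun x => (hM x).trans (le_max_left _ _)) r hr)
  have hlub : ∀ f, IsLUB (S f) (sSup (S f)) := fun f => isLUB_csSup (hne f) (hbdd f)
  have hsmul_le : ∀ (c : ℝ≥0) f, c * sSup (S f) ≤ sSup (S (c • f)) := by
    intro c f
    rcases eq_or_ne c 0 with rfl | hc
    · simp
    rw [← le_div_iff₀' (pos_iff_ne_zero.2 hc)]
    refine (hlub f).2 ?_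
    rintro r ⟨g, hg, rfl⟩
    rw [le_div_iff₀' (pos_iff_ne_zero.2 hc)]
    refine (hlub (c • f)).1 ⟨((c : ℝ) : 𝕜) • g, fun x => ?_, ?_⟩
    · simp only [ZeroAtInftyContinuousMap.smul_apply, norm_mul, RCLike.norm_ofReal,
        CompactlySupportedContinuousMap.smul_apply, smul_eq_mul, NNReal.coe_mul, NNReal.abs_eq]
      exact mul_le_mul_of_nonneg_left (hg x) c.2
    · ext; simp
  let Λ : C_c(L, ℝ≥0) →ₗ[ℝ≥0] ℝ≥0 :=
    { toFun := fun f => sSup (S f)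
      map_add' := by
        intro f₁ f₂
        apply le_antisymm
        · refine (hlub _).2 ?_
          rintro r ⟨g, hg, rfl⟩
          rw [← NNReal.coe_le_coe]
          apply le_of_forall_pos_le_add
          intro ε hε
          have hε' : 0 < ε / (‖φ‖ + 1) := by positivity
          set e := ε / (‖φ‖ + 1) with he
          have hpos : ∀ x, 0 < (f₁ x : ℝ) + f₂ x + e := fun x => by positivity
          have key : ∀ f : C_c(L, ℝ≥0), (∀ x, (f x : ℝ) ≤ f₁ x + f₂ x) →
              ∃ g' : C₀(L, 𝕜), ∀ x, g' x = ((f x / (f₁ x + f₂ x + e) : ℝ) : 𝕜) * g x := by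
            intro f hf
            refine exists_mulReal (fun x => (f x / (f₁ x + f₂ x + e) : ℝ)) ?_ 1 ?_ g
            · refine Continuous.div (by fun_prop) (by fun_prop) fun x => (hpos x).ne'
            · intro x
              rw [abs_of_nonneg (div_nonneg (NNReal.coe_nonneg (f x)) (hpos x).le), div_le_one (hpos x)]
              linarith [hf x]
          have hb : ∀ x, ‖g x‖ ≤ f₁ x + f₂ x := fun x => by simpa using hg x
          have key2 : ∀ (f : C_c(L, ℝ≥0)) (g' : C₀(L, 𝕜)),
              (∀ x, g' x = ((f x / (f₁ x + f₂ x + e) : ℝ) : 𝕜) * g x) → ∀ x, ‖g' x‖ ≤ f x := by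
            intro f g' h x
            rw [h, norm_mul, RCLike.norm_ofReal, abs_of_nonneg (div_nonneg (NNReal.coe_nonneg (f x)) (hpos x).le),
              div_mul_eq_mul_div, div_le_iff₀ (hpos x)]
            exact mul_le_mul_of_nonneg_left (by linarith [hb x]) (NNReal.coe_nonneg (f x))
          obtain ⟨g₁, hg₁⟩ := key f₁ (fun x => by simp)
          obtain ⟨g₂, hg₂⟩ := key f₂ (fun x => by simp)
          have h1 := (hlub f₁).1 ⟨g₁, key2 _ _ hg₁, rfl⟩
          have h2 := (hlub f₂).1 ⟨g₂, key2 _ _ hg₂, rfl⟩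
          rw [← NNReal.coe_le_coe] at h1 h2
          have h3 : ‖g - (g₁ + g₂)‖ ≤ e := by
            refine c0_norm_le _ hε'.le fun x => ?_
            have : (g - (g₁ + g₂)) x = ((e / (f₁ x + f₂ x + e) : ℝ) : 𝕜) * g x := by
              have : (1 : 𝕜) = ((f₁ x / (f₁ x + f₂ x + e) : ℝ) : 𝕜) +
                 ((f₂ x / (f₁ x + f₂ x + e) : ℝ) : 𝕜) + ((e / (f₁ x + f₂ x + e) : ℝ) : 𝕜) := by
                have h : (1 : ℝ) = (f₁ x / (f₁ x + f₂ x + e) : ℝ) +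
                  ((f₂ x / (f₁ x + f₂ x + e) : ℝ)) + ((e / (f₁ x + f₂ x + e) : ℝ)) := by
                  have := (hpos x).ne'
                  field_simp
                exact_mod_cast congrArg (fun r : ℝ => (r : 𝕜)) h
              simp only [ZeroAtInftyContinuousMap.sub_apply, ZeroAtInftyContinuousMap.add_apply,
                hg₁, hg₂]
              linear_combination (g x) * this
            rw [this, norm_mul, RCLike.norm_ofReal, abs_of_nonneg (div_nonneg hε'.le (hpos x).le),
              div_mul_eq_mul_div, div_le_iff₀ (hpos x)]
            exact mul_le_mul_of_nonneg_left (by linarith [hb x]) hε'.le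
          have h4 : φ g = φ g₁ + φ g₂ + φ (g - (g₁ + g₂)) := by
            rw [map_sub, map_add]; ring
          have h5 : ‖φ (g - (g₁ + g₂))‖ ≤ ε := by
            refine (φ.le_opNorm _).trans ?_
            calc ‖φ‖ * ‖g - (g₁ + g₂)‖ ≤ (‖φ‖ + 1) * e := by gcongr; linarith
              _ = ε := by rw [he]; field_simp
          have h6 : ‖φ g‖ ≤ ‖φ g₁‖ + ‖φ g₂‖ + ‖φ (g - (g₁ + g₂))‖ := by
            rw [h4]; exact norm_add₃_le
          simp only [coe_nnnorm, NNReal.coe_add] at h1 h2 ⊢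
          linarith
        · have : ∀ r₁ ∈ S f₁, ∀ r₂ ∈ S f₂, r₁ + r₂ ≤ sSup (S (f₁ + f₂)) := by
            rintro _ ⟨g₁, hg₁, rfl⟩ _ ⟨g₂, hg₂, rfl⟩
            obtain ⟨c₁, hc₁, h₁⟩ := RCLike.exists_norm_eq_mul_self (φ g₁)
            obtain ⟨c₂, hc₂, h₂⟩ := RCLike.exists_norm_eq_mul_self (φ g₂)
            refine (hlub _).1 ⟨c₁ • g₁ + c₂ • g₂, fun x => ?_, ?_⟩
            · simp only [ZeroAtInftyContinuousMap.add_apply, ZeroAtInftyContinuousMap.smul_apply,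
                CompactlySupportedContinuousMap.add_apply, NNReal.coe_add]
              refine (norm_add_le _ _).trans ?_
              simp only [norm_smul, hc₁, hc₂, one_mul]
              exact add_le_add (hg₁ x) (hg₂ x)
            · ext
              simp only [map_add, map_smul, smul_eq_mul, ← h₁, ← h₂, coe_nnnorm, NNReal.coe_add]
              rw [← RCLike.ofReal_add, RCLike.norm_ofReal, abs_of_nonneg (by positivity)]
          have h2 : ∀ r₂ ∈ S f₂, sSup (S f₁) + r₂ ≤ sSup (S (f₁ + f₂)) := by
            intro r₂ hr₂
            have hle : r₂ ≤ sSup (S (f₁ + f₂)) := by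
              obtain ⟨r₁, hr₁⟩ := hne f₁
              exact le_trans (by simp) (this r₁ hr₁ r₂ hr₂)
            rw [← le_tsub_iff_right hle]
            refine (hlub f₁).2 fun r₁ hr₁ => ?_
            rw [le_tsub_iff_right hle]
            exact this r₁ hr₁ r₂ hr₂
          have hle : sSup (S f₁) ≤ sSup (S (f₁ + f₂)) := by
            obtain ⟨r₂, hr₂⟩ := hne f₂
            exact le_trans (by simp) (h2 r₂ hr₂)
          rw [← le_tsub_iff_left hle]
          refine (hlub f₂).2 fun r₂ hr₂ => ?_
          rw [le_tsub_iff_left hle]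
          exact h2 r₂ hr₂
      map_smul' := by
        intro c f
        apply le_antisymm _ (hsmul_le c f)
        rcases eq_or_ne c 0 with rfl | hc
        · refine (hlub _).2 ?_
          rintro r ⟨g, hg, rfl⟩
          have : g = 0 := by ext x; simpa using hg x
          simp [this]
        · have := hsmul_le c⁻¹ (c • f)
          rw [smul_smul, inv_mul_cancel₀ hc, one_smul] at this
          show _ ≤ c * sSup (S f)
          calc sSup (S (c • f)) = c * (c⁻¹ * sSup (S (c • f))) := by
                rw [← mul_assoc, mul_inv_cancel₀ hc, one_mul]
            _ ≤ _ := by gcongr }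
  refine ⟨Λ, fun f g hg => ?_, fun f hf => ?_⟩
  · have := (hlub f).1 ⟨g, hg, rfl⟩
    exact_mod_cast this
  · have : Λ f ≤ ‖φ‖₊ := by
      refine (hlub f).2 fun r hr => ?_
      have := hbound f 1 zero_le_one (fun x => by exact_mod_cast hf x) r hr
      rw [mul_one] at this
      exact_mod_cast this
    exact_mod_cast this


lemma exists_measure {𝕜 : Type*} [RCLike 𝕜] {L : Type*} [TopologicalSpace L]
    [LocallyCompactSpace L] [T2Space L] [MeasurableSpace L] [BorelSpace L] {ι : Type*} [Fintype ι]
    (φ : ι → C₀(L, 𝕜) →L[𝕜] 𝕜) :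
    ∃ μ : Measure L, IsFiniteMeasure μ ∧ μ.Regular ∧ ∀ k g, ‖φ k g‖ ≤ ∫ x, ‖g x‖ ∂μ := by
  choose Λ hΛ1 hΛ2 using fun k => exists_tv (φ k)
  have hle : ∀ k f, Λ k f ≤ (∑ k, Λ k) f := by
    intro k f
    rw [LinearMap.sum_apply]
    exact Finset.single_le_sum (f := fun k => Λ k f) (fun _ _ => zero_le) (Finset.mem_univ k)
  have hfin : IsFiniteMeasure (NNRealRMK.rieszMeasure (∑ k, Λ k)) := by
    constructor
    have : NNRealRMK.rieszMeasure (∑ k, Λ k) Set.univ ≤ ((∑ k, ‖φ k‖₊ : ℝ≥0) : ENNReal) := by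
      rw [isOpen_univ.measure_eq_iSup_isCompact]
      refine iSup₂_le fun K _ => iSup_le fun hK => ?_
      obtain ⟨u, hu1, -, hu3, hu4⟩ := exists_continuous_one_zero_of_isCompact hK isClosed_empty
        (Set.disjoint_empty K)
      let f : C_c(L, ℝ≥0) := ⟨⟨fun x => (u x).toNNReal, by fun_prop⟩,
        hu3.comp_left (g := Real.toNNReal) (by simp)⟩
      have hf : ∀ x, f x = (u x).toNNReal := fun x => rfl
      calc _ = ∫⁻ x in K, 1 ∂(NNRealRMK.rieszMeasure (∑ k, Λ k)) := by simp
        _ ≤ ∫⁻ x in K, f x ∂(NNRealRMK.rieszMeasure (∑ k, Λ k)) := by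
          refine setLIntegral_mono' hK.measurableSet fun x hx => ?_
          rw [hf, hu1 hx]; simp
        _ ≤ ∫⁻ x, f x ∂(NNRealRMK.rieszMeasure (∑ k, Λ k)) := setLIntegral_le_lintegral _ _
        _ = ((∑ k, Λ k) f : ℝ≥0) := NNRealRMK.lintegral_rieszMeasure _ _
        _ ≤ _ := by
          rw [ENNReal.coe_le_coe, LinearMap.sum_apply]
          refine Finset.sum_le_sum fun k _ => ?_
          have := hΛ2 k f (fun x => by rw [hf]; simpa using (hu4 x).2)
          exact_mod_cast this
    exact this.trans_lt ENNReal.coe_lt_top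
  refine ⟨NNRealRMK.rieszMeasure (∑ k, Λ k), hfin, inferInstance, fun k g => ?_⟩
  set μ := NNRealRMK.rieszMeasure (∑ k, Λ k) with hμ
  have hgint : ∀ g : C₀(L, 𝕜), Integrable (fun x => ‖g x‖) μ := by
    intro g
    refine (Integrable.of_bound (C := ‖g‖) ?_ ?_).norm
    · exact (map_continuous g).aestronglyMeasurable
    · exact Filter.Eventually.of_forall (c0_le_norm g)
  have hcs : ∀ g : C₀(L, 𝕜), HasCompactSupport g → ‖φ k g‖ ≤ ∫ x, ‖g x‖ ∂μ := by
    intro g hg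
    let f : C_c(L, ℝ≥0) := ⟨⟨fun x => ‖g x‖₊, (map_continuous g).nnnorm⟩,
        hg.comp_left (g := fun z => ‖z‖₊) (by simp)⟩
    have h1 := hΛ1 k f g (fun x => le_rfl)
    have h2 : ∫ x, (f x : ℝ) ∂μ = _ := NNRealRMK.integral_rieszMeasure (∑ k, Λ k) f
    have h3 : ∫ x, (f x : ℝ) ∂μ = ∫ x, ‖g x‖ ∂μ := rfl
    rw [← h3, h2]
    exact h1.trans (by exact_mod_cast hle k f)
  apply le_of_forall_pos_le_add
  intro ε hε
  have hε' : 0 < ε / (‖φ k‖ + 1) := by positivity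
  set e := ε / (‖φ k‖ + 1) with he
  have hzero : ∀ᶠ x in Filter.cocompact L, ‖g x‖ < e := by
    have := g.zero_at_infty'.norm
    simp only [norm_zero] at this
    exact this.eventually (gt_mem_nhds hε')
  obtain ⟨K, hK, hKs⟩ := Filter.mem_cocompact.1 hzero
  obtain ⟨u, hu1, -, hu3, hu4⟩ := exists_continuous_one_zero_of_isCompact hK isClosed_empty
    (Set.disjoint_empty K)
  have habs : ∀ x, |u x| ≤ 1 := fun x => by rw [abs_of_nonneg (hu4 x).1]; exact (hu4 x).2
  obtain ⟨g', hg'⟩ := exists_mulReal u u.continuous 1 habs g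
  have hg's : HasCompactSupport g' := by
    have : (g' : L → 𝕜) = fun x => (u x : 𝕜) * g x := funext hg'
    rw [this]
    exact (hu3.comp_left (g := fun r : ℝ => (r : 𝕜)) (by simp)).mul_right
  have h1 : ‖g - g'‖ ≤ e := by
    refine c0_norm_le _ hε'.le fun x => ?_
    rw [ZeroAtInftyContinuousMap.sub_apply, hg']
    by_cases hx : x ∈ K
    · rw [hu1 hx]; simp [hε'.le]
    · have h2 : ‖g x‖ < e := hKs hx
      have : g x - (u x : 𝕜) * g x = ((1 - u x : ℝ) : 𝕜) * g x := by push_cast; ring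
      rw [this, norm_mul, RCLike.norm_ofReal]
      have h3 : |1 - u x| ≤ 1 := by
        rw [abs_le]; constructor <;> linarith [(hu4 x).1, (hu4 x).2]
      nlinarith [norm_nonneg (g x)]
  have h2 : ‖φ k g‖ ≤ ‖φ k g'‖ + ‖φ k (g - g')‖ := by
    have : φ k g = φ k g' + φ k (g - g') := by rw [map_sub]; ring
    rw [this]; exact norm_add_le _ _
  have h3 : ‖φ k (g - g')‖ ≤ ε := by
    refine ((φ k).le_opNorm _).trans ?_
    calc ‖φ k‖ * ‖g - g'‖ ≤ (‖φ k‖ + 1) * e := by gcongr; linarith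
      _ = ε := by rw [he]; field_simp
  have h4 : ∫ x, ‖g' x‖ ∂μ ≤ ∫ x, ‖g x‖ ∂μ := by
    refine integral_mono (hgint g') (hgint g) fun x => ?_
    simp only [hg', norm_mul, RCLike.norm_ofReal]
    exact mul_le_of_le_one_left (norm_nonneg _) (habs x)
  linarith [hcs g' hg's]

lemma exists_density {𝕜 : Type*} [RCLike 𝕜] {L : Type*} [TopologicalSpace L]
    [MeasurableSpace L] [BorelSpace L]
    (φ : C₀(L, 𝕜) →L[𝕜] 𝕜) (μ : Measure L) [IsFiniteMeasure μ]
    (hφ : ∀ g, ‖φ g‖ ≤ ∫ x, ‖g x‖ ∂μ) :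
    ∃ h : L → 𝕜, Integrable h μ ∧ ∀ g, φ g = ∫ x, g x * h x ∂μ := by
  let J : C₀(L, 𝕜) →ₗ[𝕜] Lp 𝕜 2 μ :=
    { toFun := fun g => BoundedContinuousFunction.toLp 2 μ 𝕜 g.toBCF
      map_add' := fun f g => by
        rw [← map_add]; rfl
      map_smul' := fun c g => by
        rw [RingHom.id_apply, ← map_smul]; rfl }
  have hJ : ∀ g : C₀(L, 𝕜), J g =ᵐ[μ] g := fun g => BoundedContinuousFunction.coeFn_toLp 2 μ 𝕜 g.toBCF
  set C : ℝ := (μ Set.univ ^ (1 / (1 : ENNReal).toReal - 1 / (2 : ENNReal).toReal)).toReal with hC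
  have hb : ∀ g, ‖φ g‖ ≤ C * ‖J g‖ := by
    intro g
    refine (hφ g).trans ?_
    have hm : AEStronglyMeasurable (g : L → 𝕜) μ := (map_continuous g).aestronglyMeasurable
    have h1 := eLpNorm_le_eLpNorm_mul_rpow_measure_univ (μ := μ) (p := 1) (q := 2) (by norm_num) hm
    have h2 : ∫ x, ‖g x‖ ∂μ = (eLpNorm g 1 μ).toReal := by
      rw [eLpNorm_one_eq_lintegral_enorm, integral_norm_eq_lintegral_enorm hm]
    have h3 : ‖J g‖ = (eLpNorm g 2 μ).toReal := by
      rw [Lp.norm_def, eLpNorm_congr_ae (hJ g)]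
    have h4 : eLpNorm g 2 μ ≠ ⊤ := by
      rw [← eLpNorm_congr_ae (hJ g)]; exact Lp.eLpNorm_ne_top _
    rw [h2, h3, hC, mul_comm, ← ENNReal.toReal_mul]
    refine ENNReal.toReal_mono ?_ h1
    refine ENNReal.mul_ne_top h4 ?_
    exact ENNReal.rpow_ne_top_of_nonneg (by norm_num) (measure_ne_top _ _)
  obtain ⟨r, hr⟩ := J.rangeRestrict.exists_rightInverse_of_surjective
    (LinearMap.range_eq_top.2 J.surjective_rangeRestrict)
  have hr' : ∀ v : LinearMap.range J, J (r v) = v := by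
    intro v
    have := LinearMap.congr_fun hr v
    exact congrArg Subtype.val this
  let ℓ₀ : LinearMap.range J →L[𝕜] 𝕜 := LinearMap.mkContinuous (φ.toLinearMap.comp r) C (by
    intro v
    have := hb (r v)
    rw [hr'] at this
    exact this)
  obtain ⟨ℓ, hℓ, -⟩ := exists_extension_norm_eq (LinearMap.range J) ℓ₀
  have hℓJ : ∀ g, φ g = ℓ (J g) := by
    intro g
    have h1 : ℓ (J g) = φ (r ⟨J g, g, rfl⟩) := hℓ ⟨J g, g, rfl⟩
    have h2 : J (g - r ⟨J g, g, rfl⟩) = 0 := by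
      rw [map_sub, hr']; simp
    have h3 := hb (g - r ⟨J g, g, rfl⟩)
    rw [h2, norm_zero, mul_zero, norm_le_zero_iff, map_sub, sub_eq_zero] at h3
    rw [h1, h3]
  let w : Lp 𝕜 2 μ := (InnerProductSpace.toDual 𝕜 (Lp 𝕜 2 μ)).symm ℓ
  have hw : MemLp (w : L → 𝕜) 1 μ := (Lp.memLp w).mono_exponent (by norm_num)
  refine ⟨fun x => star (w x), ?_, fun g => ?_⟩
  · exact (memLp_one_iff_integrable.1 hw.star)
  · rw [hℓJ g, ← InnerProductSpace.toDual_symm_apply (𝕜 := 𝕜), L2.inner_def]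
    refine integral_congr_ae ?_
    filter_upwards [hJ g] with x hx
    rw [hx, RCLike.inner_apply]
    rfl


lemma c0_integrable {𝕜 : Type*} [RCLike 𝕜] {L : Type*} [TopologicalSpace L]
    [MeasurableSpace L] [BorelSpace L] (μ : Measure L) [IsFiniteMeasure μ] (g : C₀(L, 𝕜)) :
    Integrable (fun x => g x) μ :=
  Integrable.of_bound (C := ‖g‖) (map_continuous g).aestronglyMeasurable
    (Filter.Eventually.of_forall (c0_le_norm g))

lemma exists_avg {𝕜 : Type*} [RCLike 𝕜] {L : Type*} [TopologicalSpace L]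
    [MeasurableSpace L] [BorelSpace L] (μ : Measure L) [IsFiniteMeasure μ] (K : Set L) :
    ∃ l : C₀(L, 𝕜) →L[𝕜] 𝕜, ‖l‖ ≤ 1 ∧
      ∀ f, l f = ((μ.real K)⁻¹ : ℝ) • ∫ x in K, f x ∂μ := by
  let l₀ : C₀(L, 𝕜) →ₗ[𝕜] 𝕜 :=
    { toFun := fun f => ((μ.real K)⁻¹ : ℝ) • ∫ x in K, f x ∂μ
      map_add' := fun f g => by
        rw [← smul_add, ← integral_add (c0_integrable _ f) (c0_integrable _ g)]; rfl
      map_smul' := fun c f => by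
        rw [RingHom.id_apply, smul_comm, ← integral_smul c (fun x => f x)]; rfl }
  refine ⟨l₀.mkContinuous 1 fun f => ?_, LinearMap.mkContinuous_norm_le _ zero_le_one _,
    fun f => rfl⟩
  show ‖((μ.real K)⁻¹ : ℝ) • ∫ x in K, f x ∂μ‖ ≤ 1 * ‖f‖
  have h := norm_setIntegral_le_of_norm_le_const (f := fun x => f x) (measure_lt_top μ K)
    (fun x _ => c0_le_norm f x)
  rw [norm_smul, Real.norm_eq_abs, abs_of_nonneg (by positivity), one_mul]
  rcases eq_or_ne (μ.real K) 0 with h0 | h0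
  · simp [h0]
  · have hpos : 0 < μ.real K := lt_of_le_of_ne measureReal_nonneg (Ne.symm h0)
    rw [inv_mul_le_iff₀ hpos]
    linarith

lemma exists_round {𝕜 : Type*} [RCLike 𝕜] {L : Type*} [TopologicalSpace L]
    [MeasurableSpace L] [BorelSpace L] (f : C₀(L, 𝕜)) (δ : ℝ) (hδ : 0 < δ) :
    ∃ q : SimpleFunc L (ℤ × ℤ), ∀ x y, q x = q y → ‖f x - f y‖ ≤ 2 * δ := by
  have hm : Measurable fun x => f x := (map_continuous f).measurable
  have hm1 : Measurable fun x => (⌊RCLike.re (f x) / δ⌋, ⌊RCLike.im (f x) / δ⌋) := by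
    refine Measurable.prodMk ?_ ?_
    · exact Int.measurable_floor.comp ((RCLike.measurable_re.comp hm).div_const δ)
    · exact Int.measurable_floor.comp ((RCLike.measurable_im.comp hm).div_const δ)
  have hbd : ∀ r : ℝ, |r| ≤ ‖f‖ → ⌊r / δ⌋ ∈ Set.Icc (⌊-(‖f‖ / δ)⌋) (⌊‖f‖ / δ⌋) := by
    intro r hr
    rw [abs_le] at hr
    constructor
    · apply Int.floor_mono
      rw [← neg_div]
      exact div_le_div_of_nonneg_right hr.1 hδ.le
    · exact Int.floor_mono (div_le_div_of_nonneg_right hr.2 hδ.le)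
  let q : SimpleFunc L (ℤ × ℤ) :=
    { toFun := fun x => (⌊RCLike.re (f x) / δ⌋, ⌊RCLike.im (f x) / δ⌋)
      measurableSet_fiber' := fun v => hm1 (measurableSet_singleton v)
      finite_range' := by
        refine Set.Finite.subset ((Set.finite_Icc (⌊-(‖f‖ / δ)⌋) (⌊‖f‖ / δ⌋)).prod
          (Set.finite_Icc (⌊-(‖f‖ / δ)⌋) (⌊‖f‖ / δ⌋))) ?_
        rintro _ ⟨x, rfl⟩
        exact ⟨hbd _ ((RCLike.abs_re_le_norm _).trans (c0_le_norm f x)),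
          hbd _ ((RCLike.abs_im_le_norm _).trans (c0_le_norm f x))⟩ }
  refine ⟨q, fun x y hxy => ?_⟩
  have h1 : ⌊RCLike.re (f x) / δ⌋ = ⌊RCLike.re (f y) / δ⌋ := congrArg Prod.fst hxy
  have h2 : ⌊RCLike.im (f x) / δ⌋ = ⌊RCLike.im (f y) / δ⌋ := congrArg Prod.snd hxy
  have key : ∀ a b : ℝ, ⌊a / δ⌋ = ⌊b / δ⌋ → |a - b| ≤ δ := by
    intro a b h
    have := Int.abs_sub_lt_one_of_floor_eq_floor h
    rw [← sub_div, abs_div, abs_of_pos hδ, div_lt_one hδ] at this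
    exact this.le
  have h3 := RCLike.norm_sq_eq_def (z := f x - f y)
  rw [map_sub, map_sub] at h3
  have h4 := abs_le.1 (key _ _ h1)
  have h5 := abs_le.1 (key _ _ h2)
  refine (pow_le_pow_iff_left₀ (norm_nonneg _) (by positivity) two_ne_zero).1 ?_
  rw [h3]
  nlinarith [mul_nonneg (sub_nonneg.2 h4.1) (sub_nonneg.2 h4.2), h4.1, h4.2, h5.1, h5.2]

lemma exists_pieces {𝕜 : Type*} [RCLike 𝕜] {L : Type*} [TopologicalSpace L]
    [LocallyCompactSpace L] [T2Space L] {ι : Type*} [Fintype ι]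
    (φ : ι → C₀(L, 𝕜) →L[𝕜] 𝕜) (f₀ : C₀(L, 𝕜)) (δ : ℝ) (hδ : 0 < δ) :
    ∃ (n : ℕ) (K : Fin n → Set L) (l : Fin n → C₀(L, 𝕜) →L[𝕜] 𝕜),
      (∀ j, IsCompact (K j)) ∧ (∀ i j, i ≠ j → Disjoint (K i) (K j)) ∧ (∀ j, ‖l j‖ ≤ 1) ∧
      (∀ j f c, (∀ x ∈ K j, f x = c) → l j f = c) ∧
      (∀ j, ∀ x ∈ K j, ‖l j f₀ - f₀ x‖ ≤ δ) ∧
      ∀ E, (∀ j, l j E = 0) → ∀ k, ‖φ k E‖ ≤ δ * ‖E‖ := by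
  borelize L
  obtain ⟨μ, hμ, hreg, hφ⟩ := exists_measure φ
  choose h hint hrep using fun k => exists_density (φ k) μ (hφ k)
  have hH : Integrable (fun x k => h k x) μ := Integrable.of_eval fun k => hint k
  obtain ⟨G, hG, hGm⟩ := (memLp_one_iff_integrable.2 hH).exists_simpleFunc_eLpNorm_sub_lt
    (by simp) (ε := ENNReal.ofReal (δ / 2)) (by simpa using hδ)
  have hGi : Integrable (fun x => G x) μ := memLp_one_iff_integrable.1 hGm
  have hG' : ∫ x, ‖(fun k => h k x) - G x‖ ∂μ ≤ δ / 2 := by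
    have hi : Integrable ((fun x k => h k x) - ⇑G) μ := hH.sub hGi
    have : ∫ x, ‖(fun k => h k x) - G x‖ ∂μ = (eLpNorm ((fun x k => h k x) - ⇑G) 1 μ).toReal := by
      rw [eLpNorm_one_eq_lintegral_enorm, ← integral_norm_eq_lintegral_enorm hi.1]; rfl
    rw [this]
    exact ENNReal.toReal_le_of_le_ofReal (by positivity) hG.le
  obtain ⟨M₀, hM₀⟩ := G.exists_forall_norm_le
  obtain ⟨M, hM, hMpos⟩ : ∃ M : ℝ, (∀ x, ‖G x‖ ≤ M) ∧ 0 < M :=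
    ⟨max M₀ 1, fun x => (hM₀ x).trans (le_max_left _ _), by positivity⟩
  obtain ⟨q, hq⟩ := exists_round f₀ (δ / 2) (by positivity)
  let P := G.pair q
  let N : ℝ := P.range.card + 1
  have hN : 0 < N := by positivity
  set e : ℝ := δ / (2 * M * N) with he
  have hepos : 0 < e := by positivity
  have hK : ∀ v, ∃ K ⊆ P ⁻¹' {v}, IsCompact K ∧ μ.real (P ⁻¹' {v} \ K) ≤ e ∧
      (μ.real K = 0 → K = ∅) := by
    intro v
    obtain ⟨K, hKs, hKc, hKm⟩ := (P.measurableSet_fiber v).exists_isCompact_sdiff_lt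
      (measure_ne_top μ _) (ε := ENNReal.ofReal e) (by simpa using hepos)
    have hKm' : μ.real (P ⁻¹' {v} \ K) ≤ e := ENNReal.toReal_le_of_le_ofReal hepos.le hKm.le
    by_cases h0 : μ.real K = 0
    · refine ⟨∅, by simp, isCompact_empty, ?_, fun _ => rfl⟩
      have : P ⁻¹' {v} \ ∅ ⊆ (P ⁻¹' {v} \ K) ∪ K := by
        intro x hx
        by_cases hxK : x ∈ K
        · exact Or.inr hxK
        · exact Or.inl ⟨hx.1, hxK⟩
      calc _ ≤ μ.real ((P ⁻¹' {v} \ K) ∪ K) := measureReal_mono this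
        _ ≤ _ := measureReal_union_le _ _
        _ ≤ e := by linarith
    · exact ⟨K, hKs, hKc, hKm', fun h => absurd h h0⟩
  choose K hKs hKc hKm hK0 using hK
  choose l hl1 hl using fun v => exists_avg (𝕜 := 𝕜) μ (K v)
  have hKdisj : ∀ v w, v ≠ w → Disjoint (K v) (K w) := by
    intro v w hvw
    rw [Set.disjoint_left]
    intro x hx hx'
    have h1 : P x = v := hKs v hx
    have h2 : P x = w := hKs w hx'
    exact hvw (h1.symm.trans h2)
  classical
  let R := P.range.filter fun v => μ.real (K v) ≠ 0
  have hRpos : ∀ j : Fin R.card, 0 < μ.real (K (R.equivFin.symm j)) := fun j =>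
    lt_of_le_of_ne measureReal_nonneg (Ne.symm (Finset.mem_filter.1 (R.equivFin.symm j).2).2)
  refine ⟨R.card, fun j => K (R.equivFin.symm j), fun j => l (R.equivFin.symm j),
    fun j => hKc _, fun i j hij => hKdisj _ _ fun h => hij ?_, fun j => hl1 _, ?_, ?_, ?_⟩
  · exact R.equivFin.symm.injective (Subtype.ext h)
  · intro j f c hf
    rw [hl, setIntegral_congr_fun (hKc _).measurableSet hf, setIntegral_const, smul_smul,
      inv_mul_cancel₀ (hRpos j).ne', one_smul]
  · intro j x hx
    have h1 : l (R.equivFin.symm j) f₀ - f₀ x =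
        ((μ.real (K (R.equivFin.symm j)))⁻¹ : ℝ) •
          ∫ y in K (R.equivFin.symm j), (f₀ y - f₀ x) ∂μ := by
      rw [integral_sub (c0_integrable _ f₀) (integrable_const _), smul_sub, ← hl,
        setIntegral_const, smul_smul, inv_mul_cancel₀ (hRpos j).ne', one_smul]
    have h2 := norm_setIntegral_le_of_norm_le_const (f := fun y => f₀ y - f₀ x) (C := δ)
      (measure_lt_top μ (K (R.equivFin.symm j))) (fun y hy => by
        have := hq y x (by
          have h1 : P y = _ := hKs _ hy
          have h2 : P x = _ := hKs _ hx
          exact congrArg Prod.snd (h1.trans h2.symm))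
        linarith)
    rw [h1, norm_smul, Real.norm_eq_abs, abs_of_nonneg (inv_nonneg.2 (hRpos j).le),
      inv_mul_le_iff₀ (hRpos j)]
    linarith
  · intro E hE k
    have hE0 : ∀ v ∈ P.range, ∫ x in K v, E x ∂μ = 0 := by
      intro v hv
      by_cases h0 : μ.real (K v) = 0
      · rw [hK0 v h0]; simp
      · have hvR : v ∈ R := Finset.mem_filter.2 ⟨hv, h0⟩
        have := hE (R.equivFin ⟨v, hvR⟩)
        simp only [Equiv.symm_apply_apply] at this
        rw [hl, smul_eq_zero] at this
        rcases this with h | h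
        · exact absurd (inv_eq_zero.1 h) h0
        · exact h
    set U := ⋃ v ∈ P.range, K v with hU
    have hUm : MeasurableSet U := Finset.measurableSet_biUnion _ fun v _ => (hKc v).measurableSet
    have hEG : Integrable (fun x => E x * G x k) μ := by
      refine (hGi.eval k).bdd_mul (c := ‖E‖) (map_continuous E).aestronglyMeasurable
        (Filter.Eventually.of_forall (c0_le_norm E))
    have hEh : Integrable (fun x => E x * h k x) μ := by
      refine (hint k).bdd_mul (c := ‖E‖) (map_continuous E).aestronglyMeasurable
        (Filter.Eventually.of_forall (c0_le_norm E))
    have hU0 : ∫ x in U, E x * G x k ∂μ = 0 := by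
      rw [hU, integral_biUnion_finset _ (fun v _ => (hKc v).measurableSet)
        (fun v _ w _ hvw => hKdisj v w hvw) (fun v _ => hEG.integrableOn)]
      refine Finset.sum_eq_zero fun v hv => ?_
      have : ∀ x ∈ K v, E x * G x k = E x * v.1 k := by
        intro x hx
        have h1 : P x = v := hKs _ hx
        rw [← h1]; rfl
      rw [setIntegral_congr_fun (hKc v).measurableSet this, integral_mul_const, hE0 v hv, zero_mul]
    have hUc : μ.real Uᶜ ≤ N * e := by
      have : Uᶜ ⊆ ⋃ v ∈ P.range, (P ⁻¹' {v} \ K v) := by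
        intro x hx
        refine Set.mem_biUnion (x := P x) (P.mem_range_self x) ⟨rfl, fun hxK => hx ?_⟩
        exact Set.mem_biUnion (x := P x) (P.mem_range_self x) hxK
      calc _ ≤ _ := measureReal_mono this (measure_ne_top _ _)
        _ ≤ _ := measureReal_biUnion_finset_le _ _
        _ ≤ ∑ v ∈ P.range, e := Finset.sum_le_sum fun v _ => hKm v
        _ = P.range.card * e := by simp
        _ ≤ N * e := by gcongr; simp [N]
    have hdec : φ k E = ∫ x, E x * (h k x - G x k) ∂μ + ∫ x in Uᶜ, E x * G x k ∂μ := by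
      rw [hrep]
      have h1 : ∫ x in Uᶜ, E x * G x k ∂μ = ∫ x, E x * G x k ∂μ := by
        rw [← integral_add_compl hUm hEG, hU0, zero_add]
      rw [h1, ← integral_add]
      · congr 1; ext x; ring
      · simp only [mul_sub]; exact hEh.sub hEG
      · exact hEG
    have h1 : ‖∫ x, E x * (h k x - G x k) ∂μ‖ ≤ ‖E‖ * (δ / 2) := by
      calc _ ≤ ∫ x, ‖E‖ * ‖(fun k => h k x) - G x‖ ∂μ := by
            refine norm_integral_le_of_norm_le ((hH.sub hGi).norm.const_mul _)
              (Filter.Eventually.of_forall fun x => ?_)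
            rw [norm_mul]
            exact mul_le_mul (c0_le_norm E x) (norm_le_pi_norm ((fun k => h k x) - G x) k)
              (norm_nonneg _) (norm_nonneg _)
        _ ≤ _ := by
            rw [integral_const_mul]
            exact mul_le_mul_of_nonneg_left hG' (norm_nonneg _)
    have h2 : ‖∫ x in Uᶜ, E x * G x k ∂μ‖ ≤ ‖E‖ * (δ / 2) := by
      calc _ ≤ (‖E‖ * M) * μ.real Uᶜ := by
            refine norm_setIntegral_le_of_norm_le_const (measure_lt_top _ _) fun x _ => ?_
            rw [norm_mul]
            exact mul_le_mul (c0_le_norm E x) ((norm_le_pi_norm (G x) k).trans (hM x))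
              (norm_nonneg _) (norm_nonneg _)
        _ ≤ (‖E‖ * M) * (N * e) := by gcongr
        _ = _ := by rw [he]; field_simp
    rw [hdec]
    refine (norm_add_le _ _).trans ?_
    linarith


lemma exists_net {𝕜 : Type*} [RCLike 𝕜] {X Y : Type*} [NormedAddCommGroup X] [NormedSpace 𝕜 X]
    [NormedAddCommGroup Y] [NormedSpace 𝕜 Y] (T : X →L[𝕜] Y) (hT : IsCompactOperator T)
    (δ : ℝ) (hδ : 0 < δ) :
    ∃ t : Finset (Y →L[𝕜] 𝕜), ∀ x, (∀ g ∈ t, ‖g (T x)‖ ≤ δ * ‖x‖) → ‖T x‖ ≤ 3 * δ * ‖x‖ := by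
  classical
  obtain ⟨Q, hQ, hTQ⟩ := hT.image_closedBall_subset_compact (f := T.toLinearMap) 1
  obtain ⟨t, ht1, ht2, ht3⟩ := Metric.finite_approx_of_totallyBounded hQ.totallyBounded δ hδ
  choose g hg1 hg2 using fun z : Y => exists_dual_vector'' 𝕜 z
  refine ⟨ht2.toFinset.image g, fun x hx => ?_⟩
  rcases eq_or_ne x 0 with rfl | hx0
  · simp
  have hxn : 0 < ‖x‖ := norm_pos_iff.2 hx0
  set x' : X := ((‖x‖⁻¹ : ℝ) : 𝕜) • x with hx'
  have hTx' : T x' = ((‖x‖⁻¹ : ℝ) : 𝕜) • T x := by rw [hx', map_smul]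
  have hc : ‖((‖x‖⁻¹ : ℝ) : 𝕜)‖ = ‖x‖⁻¹ := by
    rw [RCLike.norm_ofReal, abs_of_nonneg (by positivity)]
  have hmem : T x' ∈ Q := hTQ ⟨x', by
    rw [mem_closedBall_zero_iff, hx', norm_smul, hc, inv_mul_cancel₀ hxn.ne'], rfl⟩
  obtain ⟨z, hz, hzd⟩ := Set.mem_iUnion₂.1 (ht3 hmem)
  rw [Metric.mem_ball, dist_eq_norm] at hzd
  have h1 : ‖g z (T x')‖ ≤ δ := by
    rw [hTx', map_smul, norm_smul, hc, inv_mul_le_iff₀ hxn, mul_comm]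
    exact hx _ (Finset.mem_image_of_mem _ (ht2.mem_toFinset.2 hz))
  have h2 : ‖z‖ ≤ 2 * δ := by
    have e1 : (‖z‖ : 𝕜) = g z (T x') - g z (T x' - z) := by rw [map_sub, hg2]; ring
    have e2 : ‖z‖ = ‖(‖z‖ : 𝕜)‖ := by simp
    rw [e2, e1]
    have e3 : ‖g z (T x' - z)‖ ≤ δ := by
      refine ((g z).le_opNorm _).trans ?_
      nlinarith [hg1 z, norm_nonneg (T x' - z)]
    refine (norm_sub_le _ _).trans ?_
    linarith
  have h3 : ‖T x'‖ ≤ 3 * δ := by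
    have : T x' = (T x' - z) + z := by abel
    rw [this]
    refine (norm_add_le _ _).trans ?_
    linarith
  rw [hTx', norm_smul, hc, inv_mul_le_iff₀ hxn] at h3
  linarith

lemma exists_bumps {𝕜 : Type*} [RCLike 𝕜] {L : Type*} [TopologicalSpace L]
    [LocallyCompactSpace L] [T2Space L] {n : ℕ} (K : Fin n → Set L) (hK : ∀ j, IsCompact (K j))
    (hd : ∀ i j, i ≠ j → Disjoint (K i) (K j)) (f₀ : C₀(L, 𝕜)) (a : Fin n → 𝕜) (δ : ℝ) (hδ : 0 < δ)
    (hf : ∀ j, ∀ x ∈ K j, ‖a j - f₀ x‖ ≤ δ) :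
    ∃ (ψ : Fin n → L → ℝ) (Ψ : Fin n → C₀(L, 𝕜)), (∀ j x, Ψ j x = (ψ j x : 𝕜)) ∧
      (∀ j, Continuous (ψ j)) ∧
      (∀ j x, 0 ≤ ψ j x) ∧ (∀ x, ∑ j, ψ j x ≤ 1) ∧ (∀ j, ∀ x ∈ K j, ψ j x = 1) ∧
      (∀ i j, i ≠ j → ∀ x ∈ K j, ψ i x = 0) ∧
      (∀ j x, ψ j x ≠ 0 → ‖a j - f₀ x‖ ≤ 2 * δ) := by
  have hbump : ∀ j, ∃ f : C(L, ℝ), Set.EqOn f 1 (K j) ∧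
      Set.EqOn f 0 ((⋃ i, ⋃ (_ : i ≠ j), K i) ∪ {x | 2 * δ ≤ ‖a j - f₀ x‖}) ∧
      HasCompactSupport f ∧ ∀ x, f x ∈ Set.Icc (0 : ℝ) 1 := by
    intro j
    refine exists_continuous_one_zero_of_isCompact (hK j) ?_ ?_
    · refine IsClosed.union ?_ ?_
      · refine isClosed_iUnion_of_finite fun i => isClosed_iUnion_of_finite fun _ => (hK i).isClosed
      · exact isClosed_le continuous_const ((continuous_const.sub (map_continuous f₀)).norm)
    · rw [Set.disjoint_left]
      rintro x hx (hx' | hx')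
      · simp only [Set.mem_iUnion] at hx'
        obtain ⟨i, hij, hxi⟩ := hx'
        exact Set.disjoint_left.1 (hd i j hij) hxi hx
      · have := hf j x hx
        have h2 : 2 * δ ≤ ‖a j - f₀ x‖ := hx'
        linarith
  choose f h1 h0 hc hI using hbump
  let D : L → ℝ := fun x => max 1 (∑ i, f i x)
  have hDc : Continuous D := by fun_prop
  have hD1 : ∀ x, 1 ≤ D x := fun x => le_max_left _ _
  have hDpos : ∀ x, 0 < D x := fun x => lt_of_lt_of_le one_pos (hD1 x)
  have hoff : ∀ i j, i ≠ j → ∀ x ∈ K j, f i x = 0 := by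
    intro i j hij x hx
    exact h0 i (Or.inl (Set.mem_iUnion₂.2 ⟨j, hij.symm, hx⟩))
  have hψc : ∀ j, Continuous fun x => f j x / D x := fun j =>
    (f j).continuous.div hDc fun x => (hDpos x).ne'
  refine ⟨fun j x => f j x / D x, fun j => ⟨⟨fun x => ((f j x / D x : ℝ) : 𝕜), ?_⟩, ?_⟩,
    fun j x => rfl, hψc, ?_, ?_, ?_, ?_, ?_⟩
  · exact RCLike.continuous_ofReal.comp (hψc j)
  · have : HasCompactSupport fun x => ((f j x / D x : ℝ) : 𝕜) := by
      have h : HasCompactSupport fun x => f j x * (D x)⁻¹ := (hc j).mul_right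
      have h2 := h.comp_left (g := fun r : ℝ => (r : 𝕜)) (by simp)
      simp only [div_eq_mul_inv]
      exact h2
    exact this.is_zero_at_infty
  · exact fun j x => div_nonneg (hI j x).1 (hDpos x).le
  · intro x
    rw [← Finset.sum_div, div_le_one (hDpos x)]
    exact le_max_right _ _
  · intro j x hx
    have hs : ∑ i, f i x = 1 := by
      rw [Finset.sum_eq_single j (fun i _ hij => hoff i j hij x hx) (by simp)]
      exact h1 j hx
    show f j x / max 1 (∑ i, f i x) = 1
    rw [hs, h1 j hx]; simp
  · intro i j hij x hx
    show f i x / D x = 0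
    rw [hoff i j hij x hx, zero_div]
  · intro j x hx
    by_contra hcon
    apply hx
    show f j x / D x = 0
    rw [h0 j (Or.inr (not_le.1 hcon).le)]; simp

/-- embed a finite vector in `c₀` -/
def mkc0 {𝕜 : Type*} [RCLike 𝕜] (n : ℕ) (v : Fin n → 𝕜) : C₀(ℕ, 𝕜) where
  toFun j := if h : j < n then v ⟨j, h⟩ else 0
  continuous_toFun := continuous_of_discreteTopology
  zero_at_infty' := by
    refine tendsto_const_nhds.congr' ?_
    rw [Filter.cocompact_eq_cofinite, Nat.cofinite_eq_atTop]
    filter_upwards [Filter.eventually_ge_atTop n] with j hj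
    rw [dif_neg (not_lt.2 hj)]

lemma mkc0_lt {𝕜 : Type*} [RCLike 𝕜] (n : ℕ) (v : Fin n → 𝕜) (j : Fin n) : mkc0 n v j = v j := by
  show (if h : (j : ℕ) < n then v ⟨j, h⟩ else 0) = _
  rw [dif_pos j.2]

lemma mkc0_ge {𝕜 : Type*} [RCLike 𝕜] (n : ℕ) (v : Fin n → 𝕜) (j : ℕ) (h : n ≤ j) :
    mkc0 n v j = 0 := dif_neg (not_lt.2 h)

lemma c0_ext_n {𝕜 : Type*} [RCLike 𝕜] (n : ℕ) (a b : C₀(ℕ, 𝕜)) (h : ∀ j : Fin n, a j = b j)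
    (h' : ∀ j, n ≤ j → a j = b j) : a = b := by
  ext j
  rcases lt_or_ge j n with hj | hj
  · exact h ⟨j, hj⟩
  · exact h' j hj

lemma exists_factor {𝕜 : Type*} [RCLike 𝕜] {L : Type*} [TopologicalSpace L]
    [LocallyCompactSpace L] [T2Space L] {Y : Type*} [NormedAddCommGroup Y] [NormedSpace 𝕜 Y]
    (T : C₀(L, 𝕜) →L[𝕜] Y) (hT : IsCompactOperator T) (f₀ : C₀(L, 𝕜)) (hf₀ : ‖f₀‖ ≤ 1)
    (δ : ℝ) (hδ : 0 < δ) :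
    ∃ (n : ℕ) (P : C₀(L, 𝕜) →L[𝕜] C₀(ℕ, 𝕜)) (i : C₀(ℕ, 𝕜) →L[𝕜] C₀(L, 𝕜)),
      (∀ f, ‖P f‖ ≤ ‖f‖) ∧ (∀ a, ‖i a‖ ≤ ‖a‖) ∧ (∀ f j, n ≤ j → P f j = 0) ∧
      (∀ a : C₀(ℕ, 𝕜), (∀ j : Fin n, a j = 0) → i a = 0) ∧
      (∀ f, ‖T f - T (i (P f))‖ ≤ δ * ‖f‖) ∧
      ∀ a : C₀(ℕ, 𝕜), ‖a‖ ≤ 1 → ∃ x₁ : C₀(L, 𝕜), ‖x₁‖ ≤ 1 ∧ (∀ j : Fin n, P x₁ j = a j) ∧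
        ∀ r, 0 ≤ r → (∀ j : Fin n, ‖a j - P f₀ j‖ ≤ r) → ‖x₁ - f₀‖ ≤ r + 2 * δ := by
  obtain ⟨t, ht⟩ := exists_net T hT (δ / 6) (by positivity)
  obtain ⟨n, K, l, hK, hKd, hl1, hlc, hlf, hlE⟩ := exists_pieces
    (fun g : t => g.1.comp T) f₀ (min δ (δ / 6)) (by positivity)
  obtain ⟨ψ, Ψ, hΨ, hψc, hψ0, hψs, hψ1, hψoff, hψf⟩ := exists_bumps K hK hKd f₀ (fun j => l j f₀) δ hδ
    (fun j x hx => (hlf j x hx).trans (min_le_left _ _))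
  let P₀ : C₀(L, 𝕜) →ₗ[𝕜] C₀(ℕ, 𝕜) :=
    { toFun := fun f => mkc0 n fun j => l j f
      map_add' := fun f g => by
        refine c0_ext_n n _ _ (fun j => ?_) fun j hj => ?_
        · simp [mkc0_lt]
        · simp [mkc0_ge, hj]
      map_smul' := fun c f => by
        refine c0_ext_n n _ _ (fun j => ?_) fun j hj => ?_
        · simp [mkc0_lt]
        · simp [mkc0_ge, hj] }
  have hP₀ : ∀ f, ‖P₀ f‖ ≤ 1 * ‖f‖ := by
    intro f
    rw [one_mul]
    refine c0_norm_le _ (norm_nonneg _) fun j => ?_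
    rcases lt_or_ge j n with hj | hj
    · have : P₀ f j = l ⟨j, hj⟩ f := mkc0_lt n _ ⟨j, hj⟩
      rw [this]
      refine ((l _).le_opNorm f).trans ?_
      exact mul_le_of_le_one_left (norm_nonneg _) (hl1 _)
    · have : P₀ f j = 0 := mkc0_ge n _ j hj
      rw [this]; simp
  let i₀ : C₀(ℕ, 𝕜) →ₗ[𝕜] C₀(L, 𝕜) :=
    { toFun := fun a => ∑ j : Fin n, a j • Ψ j
      map_add' := fun a b => by
        rw [← Finset.sum_add_distrib]
        exact Finset.sum_congr rfl fun j _ => add_smul (a j) (b j) (Ψ j)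
      map_smul' := fun c a => by
        simp [Finset.smul_sum, smul_smul] }
  have hsum_apply : ∀ (F : Fin n → C₀(L, 𝕜)) x, (∑ j, F j) x = ∑ j, F j x := by
    intro F x
    let ev : C₀(L, 𝕜) →+ 𝕜 := ⟨⟨fun f => f x, rfl⟩, fun _ _ => rfl⟩
    exact map_sum ev F Finset.univ
  have hi₀a : ∀ a x, i₀ a x = ∑ j : Fin n, a j * (ψ j x : 𝕜) := by
    intro a x
    show (∑ j : Fin n, a j • Ψ j) x = _
    rw [hsum_apply]
    simp [hΨ]
  have hi₀ : ∀ a, ‖i₀ a‖ ≤ 1 * ‖a‖ := by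
    intro a
    rw [one_mul]
    refine c0_norm_le _ (norm_nonneg _) fun x => ?_
    rw [hi₀a]
    calc _ ≤ ∑ j : Fin n, ‖a j * (ψ j x : 𝕜)‖ := norm_sum_le _ _
      _ ≤ ∑ j : Fin n, ‖a‖ * ψ j x := by
        refine Finset.sum_le_sum fun j _ => ?_
        rw [norm_mul, RCLike.norm_ofReal, abs_of_nonneg (hψ0 j x)]
        exact mul_le_mul_of_nonneg_right (c0_le_norm a j) (hψ0 j x)
      _ ≤ ‖a‖ := by
        rw [← Finset.mul_sum]
        exact mul_le_of_le_one_right (norm_nonneg _) (hψs x)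
  have hiK : ∀ a (j : Fin n), ∀ x ∈ K j, i₀ a x = a j := by
    intro a j x hx
    rw [hi₀a, Finset.sum_eq_single j]
    · rw [hψ1 j x hx]; simp
    · intro k _ hkj
      rw [hψoff k j hkj x hx]; simp
    · simp
  refine ⟨n, P₀.mkContinuous 1 hP₀, i₀.mkContinuous 1 hi₀, fun f => by simpa using hP₀ f,
    fun a => by simpa using hi₀ a, fun f j hj => mkc0_ge n _ j hj, ?_, ?_, ?_⟩
  · intro a ha
    show i₀ a = 0
    ext x
    rw [hi₀a]; simp [ha]
  · intro f
    show ‖T f - T (i₀ (P₀ f))‖ ≤ _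
    rw [← map_sub]
    have hE0 : ∀ j, l j (f - i₀ (P₀ f)) = 0 := by
      intro j
      rw [map_sub, hlc j (i₀ (P₀ f)) (l j f), sub_self]
      intro x hx
      rw [hiK _ j x hx]
      exact mkc0_lt n _ j
    have h1 := ht (f - i₀ (P₀ f)) (fun g hg => by
      refine (hlE _ hE0 ⟨g, hg⟩).trans ?_
      exact mul_le_mul_of_nonneg_right (min_le_right _ _) (norm_nonneg _))
    have h2 : ‖f - i₀ (P₀ f)‖ ≤ 2 * ‖f‖ := by
      refine (norm_sub_le _ _).trans ?_
      linarith [hi₀ (P₀ f), hP₀ f]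
    refine h1.trans ?_
    nlinarith
  · intro a ha
    have hs0 : ∀ x, 0 ≤ ∑ j, ψ j x := fun x => Finset.sum_nonneg fun j _ => hψ0 j x
    obtain ⟨f₁, hf₁⟩ := exists_mulReal (fun x => 1 - ∑ j, ψ j x) (by fun_prop) 1 (fun x => by
      rw [abs_le]; constructor <;> linarith [hs0 x, hψs x]) f₀
    refine ⟨f₁ + i₀ a, ?_, fun j => ?_, fun r hr hrj => ?_⟩
    · refine c0_norm_le _ zero_le_one fun x => ?_
      rw [ZeroAtInftyContinuousMap.add_apply, hf₁, hi₀a]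
      calc _ ≤ ‖((1 - ∑ j, ψ j x : ℝ) : 𝕜) * f₀ x‖ + ∑ j : Fin n, ‖a j * (ψ j x : 𝕜)‖ :=
            (norm_add_le _ _).trans (add_le_add le_rfl (norm_sum_le _ _))
        _ ≤ (1 - ∑ j, ψ j x) + ∑ j : Fin n, ψ j x := by
          refine add_le_add ?_ (Finset.sum_le_sum fun j _ => ?_)
          · rw [norm_mul, RCLike.norm_ofReal, abs_of_nonneg (by linarith [hψs x])]
            exact mul_le_of_le_one_right (by linarith [hψs x]) ((c0_le_norm f₀ x).trans hf₀)
          · rw [norm_mul, RCLike.norm_ofReal, abs_of_nonneg (hψ0 j x)]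
            exact mul_le_of_le_one_left (hψ0 j x) ((c0_le_norm a j).trans ha)
        _ = 1 := by ring
    · have : P₀ (f₁ + i₀ a) j = l j (f₁ + i₀ a) := mkc0_lt n _ j
      refine this.trans (hlc j _ _ fun x hx => ?_)
      rw [ZeroAtInftyContinuousMap.add_apply, hiK a j x hx, hf₁]
      have : ∑ k, ψ k x = 1 := by
        rw [Finset.sum_eq_single j (fun k _ hkj => hψoff k j hkj x hx) (by simp)]
        exact hψ1 j x hx
      rw [this]; simp
    · refine c0_norm_le _ (by positivity) fun x => ?_
      have : (f₁ + i₀ a - f₀) x = ∑ j : Fin n, (a j - f₀ x) * (ψ j x : 𝕜) := by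
        rw [ZeroAtInftyContinuousMap.sub_apply, ZeroAtInftyContinuousMap.add_apply, hf₁, hi₀a]
        simp only [sub_mul, Finset.sum_sub_distrib, ← Finset.mul_sum]
        push_cast
        ring
      rw [this]
      calc _ ≤ ∑ j : Fin n, ‖(a j - f₀ x) * (ψ j x : 𝕜)‖ := norm_sum_le _ _
        _ ≤ ∑ j : Fin n, (r + 2 * δ) * ψ j x := by
          refine Finset.sum_le_sum fun j _ => ?_
          rw [norm_mul, RCLike.norm_ofReal, abs_of_nonneg (hψ0 j x)]
          rcases eq_or_ne (ψ j x) 0 with h0 | h0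
          · simp [h0]
          · refine mul_le_mul_of_nonneg_right ?_ (hψ0 j x)
            have e1 : ‖a j - l j f₀‖ ≤ r := by
              have := hrj j
              have e2 : P₀ f₀ j = l j f₀ := mkc0_lt n _ j
              rw [← e2]; exact this
            have e3 : a j - f₀ x = (a j - l j f₀) + (l j f₀ - f₀ x) := by ring
            rw [e3]
            exact (norm_add_le _ _).trans (add_le_add e1 (hψf j x h0))
        _ ≤ r + 2 * δ := by
          rw [← Finset.mul_sum]
          exact mul_le_of_le_one_right (by positivity) (hψs x)


lemma op_norm_smul_aux {𝕜 : Type*} [RCLike 𝕜] {X Y : Type*} [NormedAddCommGroup X]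
    [NormedSpace 𝕜 X] [NormedAddCommGroup Y] [NormedSpace 𝕜 Y] (c : 𝕜) (A : X →L[𝕜] Y) :
    ‖c • A‖ = ‖c‖ * ‖A‖ := norm_smul c A

lemma smul_sub_self_aux {𝕜 : Type*} [RCLike 𝕜] {X : Type*} [NormedAddCommGroup X]
    [NormedSpace 𝕜 X] (c : ℝ) (x : X) : (c : 𝕜) • x - x = ((c - 1 : ℝ) : 𝕜) • x := by
  push_cast; rw [sub_smul, one_smul]



lemma exists_unit_coord {𝕜 : Type*} [RCLike 𝕜] (n : ℕ) (x : C₀(ℕ, 𝕜)) (hx : ‖x‖ = 1)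
    (ht : ∀ j, n ≤ j → ‖x j‖ ≤ 1 / 4) : ∃ j : Fin n, ‖x j‖ = 1 := by
  by_contra hcon
  push Not at hcon
  have hlt : ∀ j : Fin n, ‖x j‖ < 1 := fun j =>
    lt_of_le_of_ne (hx ▸ c0_le_norm x j) (hcon j)
  have : ∃ C : ℝ, 0 ≤ C ∧ C < 1 ∧ ∀ j : Fin n, ‖x j‖ ≤ C := by
    rcases isEmpty_or_nonempty (Fin n) with he | he
    · exact ⟨0, le_rfl, one_pos, fun j => he.elim j⟩
    · obtain ⟨m, hm⟩ := Finite.exists_max fun j : Fin n => ‖x j‖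
      exact ⟨‖x m‖, norm_nonneg _, hlt m, hm⟩
  obtain ⟨C, hC0, hC1, hC⟩ := this
  have h1 : ‖x‖ ≤ max C (1 / 4) := by
    refine c0_norm_le x (le_max_of_le_left hC0) fun j => ?_
    rcases lt_or_ge j n with hj | hj
    · exact (hC ⟨j, hj⟩).trans (le_max_left _ _)
    · exact (ht j hj).trans (le_max_right _ _)
  rw [hx] at h1
  have : max C (1 / 4) < 1 := max_lt hC1 (by norm_num)
  linarith

lemma main_step {𝕜 : Type*} [RCLike 𝕜] {Y : Type*}
    [NormedAddCommGroup Y] [NormedSpace 𝕜 Y]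
    {L : Type*} [TopologicalSpace L] [LocallyCompactSpace L] [T2Space L]
    (η : ℝ → ℝ) (h : BPBpCompactWith 𝕜 (C₀(ℕ, 𝕜)) Y η) (ε ε' θ : ℝ)
    (hε' : 0 < ε') (hε'4 : ε' ≤ 1 / 4) (hθ : 0 < θ) (hθ1 : θ ≤ 1 / 8) (hθη : 2 * θ ≤ η ε')
    (hsum : ε' + 4 * θ < ε)
    (T : C₀(L, 𝕜) →L[𝕜] Y) (hT : IsCompactOperator T) (hT1 : ‖T‖ = 1)
    (f₀ : C₀(L, 𝕜)) (hf₀ : ‖f₀‖ = 1) (hTf : 1 - θ < ‖T f₀‖) :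
    ∃ S : C₀(L, 𝕜) →L[𝕜] Y, ∃ x₁ : C₀(L, 𝕜), IsCompactOperator S ∧ ‖S‖ = 1 ∧ ‖x₁‖ = 1 ∧
          ‖S x₁‖ = 1 ∧ ‖f₀ - x₁‖ < ε ∧ ‖S - T‖ < ε := by
  obtain ⟨n, P, i, hP, hi, hPn, hin, hTP, hx⟩ := exists_factor T hT f₀ hf₀.le θ hθ
  have hTle : ∀ f, ‖T f‖ ≤ ‖f‖ := fun f => by simpa [hT1] using T.le_opNorm f
  set A : C₀(ℕ, 𝕜) →L[𝕜] Y := T.comp i with hA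
  have hAc : IsCompactOperator A := hT.comp_clm i
  set r := ‖A‖ with hr
  have hr1 : r ≤ 1 := A.opNorm_le_bound zero_le_one fun a => by
    rw [one_mul]; exact (hTle _).trans (hi a)
  have hAP : 1 - 2 * θ < ‖A (P f₀)‖ := by
    have h1 := hTP f₀
    rw [hf₀] at h1
    have h2 : ‖T f₀‖ ≤ ‖T f₀ - T (i (P f₀))‖ + ‖T (i (P f₀))‖ := by
      simpa using norm_add_le (T f₀ - T (i (P f₀))) (T (i (P f₀)))
    have h3 : ‖A (P f₀)‖ = ‖T (i (P f₀))‖ := rfl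
    linarith
  set ρ := ‖P f₀‖ with hρ
  have hρ1 : ρ ≤ 1 := hf₀ ▸ hP f₀
  have hArρ : ‖A (P f₀)‖ ≤ r * ρ := A.le_opNorm _
  have hr0 : 0 ≤ r := by rw [hr]; exact norm_nonneg A
  have hρ0 : 0 ≤ ρ := norm_nonneg _
  have hrθ : 1 - 2 * θ < r := by nlinarith
  have hρθ : 1 - 2 * θ < ρ := by nlinarith
  have hrpos : 0 < r := by linarith
  have hρpos : 0 < ρ := by linarith
  have hcr : ‖((r⁻¹ : ℝ) : 𝕜)‖ = r⁻¹ := by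
    rw [RCLike.norm_ofReal, abs_of_nonneg (by positivity)]
  have hcρ : ‖((ρ⁻¹ : ℝ) : 𝕜)‖ = ρ⁻¹ := by
    rw [RCLike.norm_ofReal, abs_of_nonneg (by positivity)]
  set T' : C₀(ℕ, 𝕜) →L[𝕜] Y := ((r⁻¹ : ℝ) : 𝕜) • A with hT'
  set x₀ : C₀(ℕ, 𝕜) := ((ρ⁻¹ : ℝ) : 𝕜) • P f₀ with hx₀
  have hT'c : IsCompactOperator T' := hAc.smul ((r⁻¹ : ℝ) : 𝕜)
  have hT'1 : ‖T'‖ = 1 := by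
    rw [hT']
    refine (op_norm_smul_aux _ A).trans ?_
    rw [hcr]; exact inv_mul_cancel₀ hrpos.ne'
  have hx₀1 : ‖x₀‖ = 1 := by rw [hx₀, norm_smul, hcρ]; exact inv_mul_cancel₀ hρpos.ne'
  have hTx₀ : 1 - η ε' < ‖T' x₀‖ := by
    have e : ‖T' x₀‖ = r⁻¹ * (ρ⁻¹ * ‖A (P f₀)‖) := by
      rw [hT', hx₀, ContinuousLinearMap.smul_apply, map_smul, norm_smul, norm_smul, hcr, hcρ]
    have e1 : ‖A (P f₀)‖ ≤ ρ⁻¹ * ‖A (P f₀)‖ :=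
      le_mul_of_one_le_left (norm_nonneg _) ((one_le_inv₀ hρpos).2 hρ1)
    have e2 : ρ⁻¹ * ‖A (P f₀)‖ ≤ r⁻¹ * (ρ⁻¹ * ‖A (P f₀)‖) :=
      le_mul_of_one_le_left (by positivity) ((one_le_inv₀ hrpos).2 hr1)
    linarith
  obtain ⟨S', x', hS'c, hS'1, hx'1, hSx', hxx, hST⟩ := (h ε' hε').2 T' hT'c hT'1 x₀ hx₀1 hTx₀
  have htail : ∀ j, n ≤ j → ‖x' j‖ ≤ ε' := by
    intro j hj
    have e := c0_le_norm (x₀ - x') j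
    have e1 : (x₀ - x') j = - x' j := by
      rw [ZeroAtInftyContinuousMap.sub_apply, hx₀, ZeroAtInftyContinuousMap.smul_apply, hPn _ _ hj]
      simp
    rw [e1, norm_neg] at e
    exact e.trans hxx.le
  obtain ⟨j₀, hj₀⟩ := exists_unit_coord n x' hx'1 fun j hj => (htail j hj).trans hε'4
  set a1 : C₀(ℕ, 𝕜) := mkc0 n fun j => x' j with ha1
  set b1 : C₀(ℕ, 𝕜) := x' - a1 with hb1
  have hb1lt : ∀ j : Fin n, b1 j = 0 := fun j => by
    rw [hb1, ZeroAtInftyContinuousMap.sub_apply, ha1, mkc0_lt, sub_self]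
  have hb1ge : ∀ j, n ≤ j → b1 j = x' j := fun j hj => by
    rw [hb1, ZeroAtInftyContinuousMap.sub_apply, ha1, mkc0_ge _ _ _ hj, sub_zero]
  let φ₀ : C₀(ℕ, 𝕜) →ₗ[𝕜] 𝕜 :=
    { toFun := fun a => (starRingEnd 𝕜) (x' j₀) * a j₀
      map_add' := fun a b => by
        rw [ZeroAtInftyContinuousMap.add_apply]; ring
      map_smul' := fun c a => by
        rw [ZeroAtInftyContinuousMap.smul_apply]; simp only [smul_eq_mul, RingHom.id_apply]; ring }
  have hφ₀ : ∀ a, ‖φ₀ a‖ ≤ 1 * ‖a‖ := fun a => by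
    show ‖(starRingEnd 𝕜) (x' j₀) * a j₀‖ ≤ _
    rw [norm_mul, RCLike.norm_conj, hj₀]
    exact mul_le_mul_of_nonneg_left (c0_le_norm a j₀) zero_le_one
  set φ : C₀(ℕ, 𝕜) →L[𝕜] 𝕜 := φ₀.mkContinuous 1 hφ₀ with hφ
  have hφa : ∀ a, φ a = (starRingEnd 𝕜) (x' j₀) * a j₀ := fun a => rfl
  have hφn : ∀ a, ‖φ a‖ ≤ ‖a‖ := fun a => (hφ₀ a).trans_eq (one_mul _)
  set R : C₀(L, 𝕜) →L[𝕜] C₀(ℕ, 𝕜) := P + (φ.comp P).smulRight b1 with hR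
  have hRf : ∀ f, R f = P f + φ (P f) • b1 := fun f => rfl
  have hRn : ∀ f, ‖R f‖ ≤ ‖f‖ := by
    intro f
    refine c0_norm_le _ (norm_nonneg _) fun j => ?_
    rw [hRf, ZeroAtInftyContinuousMap.add_apply, ZeroAtInftyContinuousMap.smul_apply]
    rcases lt_or_ge j n with hj | hj
    · have : b1 j = 0 := hb1lt ⟨j, hj⟩
      rw [this, smul_zero, add_zero]
      exact (c0_le_norm _ _).trans (hP f)
    · rw [hPn f j hj, zero_add, hb1ge j hj, norm_smul]
      have e1 : ‖φ (P f)‖ ≤ ‖f‖ := (hφn _).trans (hP f)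
      have e2 : ‖x' j‖ ≤ 1 := hx'1 ▸ c0_le_norm x' j
      exact (mul_le_of_le_one_right (norm_nonneg _) e2).trans e1
  obtain ⟨x₁, hx₁1, hx₁P, hx₁d⟩ := hx x' hx'1.le
  have hPx₁ : P x₁ = a1 := c0_ext_n n _ _ (fun j => by rw [hx₁P j, ha1, mkc0_lt])
    fun j hj => by rw [hPn _ _ hj, ha1, mkc0_ge _ _ _ hj]
  have hRx₁ : R x₁ = x' := by
    have e : φ (P x₁) = 1 := by
      rw [hφa, hx₁P j₀, RCLike.conj_mul, hj₀]; simp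
    rw [hRf, e, one_smul, hPx₁, hb1]; abel
  have hS'le : ∀ a, ‖S' a‖ ≤ ‖a‖ := fun a => by simpa [hS'1] using S'.le_opNorm a
  have hSx₁ : ‖(S'.comp R) x₁‖ = 1 := by
    rw [ContinuousLinearMap.comp_apply, hRx₁, hSx']
  have hSle : ‖S'.comp R‖ ≤ 1 := ContinuousLinearMap.opNorm_le_bound _ zero_le_one fun f => by
    rw [one_mul]; exact (hS'le _).trans (hRn f)
  have hx₁1' : ‖x₁‖ = 1 := le_antisymm hx₁1 (by
    rw [← hSx₁]; exact (hS'le _).trans (hRn x₁))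
  refine ⟨S'.comp R, x₁, hS'c.comp_clm R, le_antisymm hSle ?_, hx₁1', hSx₁, ?_, ?_⟩
  · have := (S'.comp R).le_opNorm x₁
    rwa [hSx₁, hx₁1', mul_one] at this
  · have h1 : ‖x₀ - P f₀‖ ≤ 2 * θ := by
      have e : x₀ - P f₀ = ((ρ⁻¹ - 1 : ℝ) : 𝕜) • P f₀ := by
        rw [hx₀]; exact smul_sub_self_aux _ _
      have e2 : 0 ≤ ρ⁻¹ - 1 := sub_nonneg.2 ((one_le_inv₀ hρpos).2 hρ1)
      rw [e, norm_smul, RCLike.norm_ofReal, abs_of_nonneg e2, ← hρ, sub_mul,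
        inv_mul_cancel₀ hρpos.ne']
      linarith
    have h2 := hx₁d (ε' + 2 * θ) (by positivity) fun j => by
      have e : x' j - P f₀ j = - (x₀ - x') j + (x₀ - P f₀) j := by
        rw [ZeroAtInftyContinuousMap.sub_apply, ZeroAtInftyContinuousMap.sub_apply]; ring
      rw [e]
      refine (norm_add_le _ _).trans (add_le_add ?_ ((c0_le_norm _ _).trans h1))
      rw [norm_neg]
      exact (c0_le_norm _ _).trans hxx.le
    rw [norm_sub_rev]
    linarith
  · refine lt_of_le_of_lt (ContinuousLinearMap.opNorm_le_bound _ (M := ε' + 3 * θ)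
      (by positivity) fun f => ?_) (by linarith)
    have e0 : T' b1 = 0 := by
      rw [hT', ContinuousLinearMap.smul_apply, hA, ContinuousLinearMap.comp_apply, hin b1 hb1lt]
      simp
    have e1 : T' (R f) = T' (P f) := by
      rw [hRf, map_add, map_smul, e0, smul_zero, add_zero]
    have e2 : (S'.comp R - T) f = (S' - T') (R f) + (T' (P f) - A (P f))
        + (T (i (P f)) - T f) := by
      have : A (P f) = T (i (P f)) := rfl
      rw [ContinuousLinearMap.sub_apply, ContinuousLinearMap.sub_apply, e1, this,
        ContinuousLinearMap.comp_apply]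
      abel
    have e3 : ‖(S' - T') (R f)‖ ≤ ε' * ‖f‖ :=
      ((S' - T').le_opNorm _).trans
        (mul_le_mul hST.le (hRn f) (norm_nonneg _) hε'.le)
    have e4 : ‖T' (P f) - A (P f)‖ ≤ 2 * θ * ‖f‖ := by
      have e : T' (P f) - A (P f) = ((r⁻¹ - 1 : ℝ) : 𝕜) • A (P f) := by
        rw [hT', ContinuousLinearMap.smul_apply]; push_cast; rw [sub_smul, one_smul]
      have e5 : 0 ≤ r⁻¹ - 1 := sub_nonneg.2 ((one_le_inv₀ hrpos).2 hr1)
      rw [e, norm_smul, RCLike.norm_ofReal, abs_of_nonneg e5]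
      have e6 : ‖A (P f)‖ ≤ r * ‖f‖ :=
        (A.le_opNorm _).trans (mul_le_mul_of_nonneg_left (hP f) hr0)
      calc (r⁻¹ - 1) * ‖A (P f)‖ ≤ (r⁻¹ - 1) * (r * ‖f‖) := mul_le_mul_of_nonneg_left e6 e5
        _ = (1 - r) * ‖f‖ := by field_simp
        _ ≤ _ := mul_le_mul_of_nonneg_right (by linarith) (norm_nonneg _)
    have e7 : ‖T (i (P f)) - T f‖ ≤ θ * ‖f‖ := by rw [norm_sub_rev]; exact hTP f
    rw [e2]
    refine (norm_add₃_le).trans ?_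
    linarith


/-- Theorem 3.1: if (c₀, Y) has the BPBp for compact operators, then so does (C₀(L), Y)
for every locally compact Hausdorff topological space L. -/
theorem bpbp_compact_C0 {𝕜 : Type*} [RCLike 𝕜] {Y : Type*}
    [NormedAddCommGroup Y] [NormedSpace 𝕜 Y] [CompleteSpace Y]
    (L : Type*) [TopologicalSpace L] [LocallyCompactSpace L] [T2Space L]
    (h : BPBpCompact 𝕜 (ZeroAtInftyContinuousMap ℕ 𝕜) Y) :
    BPBpCompact 𝕜 (ZeroAtInftyContinuousMap L 𝕜) Y := by
  obtain ⟨η, h⟩ := h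
  refine ⟨fun ε => min (η (min ε 1 / 4)) (min ε 1) / 8, fun ε hε => ?_⟩
  have hm : 0 < min ε 1 := lt_min hε one_pos
  have hη := (h (min ε 1 / 4) (by positivity)).1
  have hθ : 0 < min (η (min ε 1 / 4)) (min ε 1) / 8 := by positivity
  have h1 := min_le_left (η (min ε 1 / 4)) (min ε 1)
  have h2 := min_le_right (η (min ε 1 / 4)) (min ε 1)
  have h3 := min_le_left ε 1
  have h4 := min_le_right ε 1
  refine ⟨hθ, fun T hT hT1 f₀ hf₀ hTf => ?_⟩
  exact main_step η h ε (min ε 1 / 4) _ (by positivity) (by linarith) hθ (by linarith)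
    (by linarith) (by linarith) T hT hT1 f₀ hf₀ hTf
end
end

section
/- Let X and Y be Banach spaces. Then the following are equivalent: (i) the pair (c₀(X), Y) has the BPBp for compact operators; (ii) there is a function η : (0,∞) → (0,∞) such that all the pairs (ℓ∞^m(X), Y), m ∈ ℕ, have the BPBp for compact operators with the function η. -/
open MeasureTheory

noncomputable section

open Filter Topology

theorem c0_norm_le_s7 {X : Type*} [NormedAddCommGroup X] (f : ZeroAtInftyContinuousMap ℕ X)
    {C : ℝ} (hC : 0 ≤ C) : ‖f‖ ≤ C ↔ ∀ n, ‖f n‖ ≤ C := by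
  rw [← ZeroAtInftyContinuousMap.norm_toBCF_eq_norm, BoundedContinuousFunction.norm_le hC]
  rfl

theorem c0_apply_le {X : Type*} [NormedAddCommGroup X] (f : ZeroAtInftyContinuousMap ℕ X)
    (n : ℕ) : ‖f n‖ ≤ ‖f‖ := (c0_norm_le_s7 f (norm_nonneg f)).1 le_rfl n

theorem lp_norm_le {X : Type*} [NormedAddCommGroup X] {m : ℕ} (f : PiLp ⊤ (fun _ : Fin m => X))
    {C : ℝ} (hC : 0 ≤ C) (h : ∀ n, ‖f n‖ ≤ C) : ‖f‖ ≤ C := by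
  rw [← PiLp.norm_ofLp]
  exact (pi_norm_le_iff_of_nonneg hC).2 h

def resL (𝕜 : Type*) [RCLike 𝕜] (X : Type*) [NormedAddCommGroup X] [NormedSpace 𝕜 X] (m : ℕ) :
    ZeroAtInftyContinuousMap ℕ X →L[𝕜] PiLp ⊤ (fun _ : Fin m => X) :=
  LinearMap.mkContinuous
    { toFun := fun f => WithLp.toLp ⊤ (fun i => f i)
      map_add' := fun f g => by ext i; simp
      map_smul' := fun c f => by ext i; simp } 1
    (fun f => by
      rw [one_mul]
      exact lp_norm_le _ (norm_nonneg f) (fun i => c0_apply_le f i))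

def extF {X : Type*} [NormedAddCommGroup X] {m : ℕ} (x : PiLp ⊤ (fun _ : Fin m => X)) :
    ZeroAtInftyContinuousMap ℕ X where
  toFun := fun n => if h : n < m then x ⟨n, h⟩ else 0
  continuous_toFun := continuous_of_discreteTopology
  zero_at_infty' := by
    rw [cocompact_eq_atTop]
    refine tendsto_const_nhds.congr' ?_
    filter_upwards [eventually_ge_atTop m] with n hn
    simp [not_lt.2 hn]

theorem extF_apply {X : Type*} [NormedAddCommGroup X] {m : ℕ} (x : PiLp ⊤ (fun _ : Fin m => X))
    (n : ℕ) : extF x n = if h : n < m then x ⟨n, h⟩ else 0 := rfl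

def extL (𝕜 : Type*) [RCLike 𝕜] (X : Type*) [NormedAddCommGroup X] [NormedSpace 𝕜 X] (m : ℕ) :
    PiLp ⊤ (fun _ : Fin m => X) →L[𝕜] ZeroAtInftyContinuousMap ℕ X :=
  LinearMap.mkContinuous
    { toFun := fun x => extF x
      map_add' := fun f g => by
        ext n; simp only [extF_apply, ZeroAtInftyContinuousMap.add_apply]; split_ifs <;> simp
      map_smul' := fun c f => by
        ext n; simp only [extF_apply, ZeroAtInftyContinuousMap.smul_apply]; split_ifs <;> simp } 1
    (fun f => by
      rw [one_mul]
      refine (c0_norm_le_s7 _ (norm_nonneg f)).2 (fun n => ?_)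
      change ‖extF f n‖ ≤ _
      rw [extF_apply]
      split_ifs
      · exact PiLp.norm_apply_le f _
      · simp)

section aux
variable {𝕜 : Type*} [RCLike 𝕜] {X Y : Type*}
    [NormedAddCommGroup X] [NormedSpace 𝕜 X] [NormedAddCommGroup Y] [NormedSpace 𝕜 Y]

theorem extL_apply (m : ℕ) (x : PiLp ⊤ (fun _ : Fin m => X)) (n : ℕ) :
    extL 𝕜 X m x n = if h : n < m then x ⟨n, h⟩ else 0 := rfl

theorem resL_apply (m : ℕ) (f : ZeroAtInftyContinuousMap ℕ X) (i : Fin m) :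
    resL 𝕜 X m f i = f i := rfl

theorem res_ext (m : ℕ) (x : PiLp ⊤ (fun _ : Fin m => X)) : resL 𝕜 X m (extL 𝕜 X m x) = x := by
  ext i
  simp [resL_apply, extL_apply]

theorem ext_res (m : ℕ) (f : ZeroAtInftyContinuousMap ℕ X) (n : ℕ) :
    extL 𝕜 X m (resL 𝕜 X m f) n = if n < m then f n else 0 := by
  rw [extL_apply]
  split_ifs <;> simp [resL_apply]

theorem resL_norm : ∀ m, ‖resL 𝕜 X m‖ ≤ 1 := fun _ => LinearMap.mkContinuous_norm_le _ zero_le_one _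
theorem extL_norm : ∀ m, ‖extL 𝕜 X m‖ ≤ 1 := fun _ => LinearMap.mkContinuous_norm_le _ zero_le_one _

theorem resL_le (m : ℕ) (f : ZeroAtInftyContinuousMap ℕ X) : ‖resL 𝕜 X m f‖ ≤ ‖f‖ := by
  simpa using (resL 𝕜 X m).le_of_opNorm_le (resL_norm m) f

theorem extL_eq (m : ℕ) (x : PiLp ⊤ (fun _ : Fin m => X)) : ‖extL 𝕜 X m x‖ = ‖x‖ := by
  apply le_antisymm
  · simpa using (extL 𝕜 X m).le_of_opNorm_le (extL_norm m) x
  · have := resL_le (𝕜 := 𝕜) m (extL 𝕜 X m x)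
    rwa [res_ext] at this

/-- tails of elements are small -/
theorem tail_small (f : ZeroAtInftyContinuousMap ℕ X) {δ : ℝ} (hδ : 0 < δ) :
    ∃ M, ∀ m, M ≤ m → ‖f - extL 𝕜 X m (resL 𝕜 X m f)‖ ≤ δ ∧ ∀ n, m ≤ n → ‖f n‖ ≤ δ := by
  have h := f.zero_at_infty'
  rw [cocompact_eq_atTop] at h
  obtain ⟨M, hM⟩ := Metric.tendsto_atTop.1 h δ hδ
  have hM' : ∀ n, M ≤ n → ‖f n‖ ≤ δ := fun n hn => by
    have := hM n hn
    rw [dist_zero_right] at this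
    exact this.le
  refine ⟨M, fun m hm => ⟨(c0_norm_le_s7 _ hδ.le).2 fun n => ?_, fun n hn => hM' n (hm.trans hn)⟩⟩
  rw [ZeroAtInftyContinuousMap.sub_apply, ext_res]
  split_ifs with h
  · simpa using hδ.le
  · simpa using hM' n (by omega)

/-- compact operators are small on tails -/
theorem op_tail (T : ZeroAtInftyContinuousMap ℕ X →L[𝕜] Y) (hT : IsCompactOperator T)
    {δ : ℝ} (hδ : 0 < δ) :
    ∃ M, ∀ v : ZeroAtInftyContinuousMap ℕ X, ‖v‖ ≤ 1 → (∀ n < M, v n = 0) → ‖T v‖ ≤ δ := by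
  by_contra! hcon
  choose v hv1 hv0 hvT using hcon
  obtain ⟨K, hK, hKs⟩ := IsCompactOperator.image_closedBall_subset_compact (𝕜₁ := 𝕜) (f := T.toLinearMap) hT 1
  have hmem : ∀ n, T (v n) ∈ K := fun n => hKs ⟨v n, by simpa using hv1 n, rfl⟩
  obtain ⟨y, -, φ, hφ, hlim⟩ := hK.tendsto_subseq hmem
  have hy : δ ≤ ‖y‖ := ge_of_tendsto' hlim.norm (fun n => (hvT _).le)
  have key : ∀ k : ℕ, ∃ m : ℕ, ∃ u : ZeroAtInftyContinuousMap ℕ X, ‖u‖ ≤ 1 ∧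
      (∀ n, m ≤ n → u n = 0) ∧ ‖T u - (k : 𝕜) • y‖ ≤ k * (δ / 2) := by
    intro k
    induction k with
    | zero => exact ⟨0, 0, by simp, by simp, by simp⟩
    | succ k ih =>
      obtain ⟨m, u, hu1, hu0, huT⟩ := ih
      obtain ⟨N, hN⟩ := Metric.tendsto_atTop.1 hlim (δ / 4) (by positivity)
      have h1 := hN (max N m) (le_max_left _ _)
      have h2 : m ≤ φ (max N m) := (le_max_right N m).trans (hφ.id_le _)
      simp only [Function.comp_apply, dist_eq_norm] at h1
      set w := v (φ (max N m)) with hw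
      have hc : 0 < δ / 4 / (‖T‖ + 1) := by positivity
      obtain ⟨M, hM⟩ := tail_small (𝕜 := 𝕜) w hc
      set p := max m M
      have hM1 := (hM p (le_max_right _ _)).1
      set w' := extL 𝕜 X p (resL 𝕜 X p w) with hw'
      have hTw : ‖T w - T w'‖ ≤ δ / 4 := by
        rw [← map_sub]
        calc ‖T (w - w')‖ ≤ ‖T‖ * ‖w - w'‖ := T.le_opNorm _
          _ ≤ (‖T‖ + 1) * (δ / 4 / (‖T‖ + 1)) := by gcongr; linarith
          _ = δ / 4 := by field_simp
      refine ⟨p, u + w', ?_, ?_, ?_⟩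
      · refine (c0_norm_le_s7 _ zero_le_one).2 fun n => ?_
        rw [ZeroAtInftyContinuousMap.add_apply, hw', ext_res]
        by_cases hn : n < m
        · have : w n = 0 := hv0 _ n (by omega)
          simp only [this, ite_self, add_zero]
          exact (c0_apply_le u n).trans hu1
        · rw [hu0 n (by omega), zero_add]
          split_ifs
          · exact (c0_apply_le w n).trans (hv1 _)
          · simp
      · intro n hn
        have hmn : m ≤ n := (le_max_left _ _).trans hn
        rw [ZeroAtInftyContinuousMap.add_apply, hw', ext_res, hu0 n hmn, if_neg (not_lt.2 hn), add_zero]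
      · have : T (u + w') - ((k + 1 : ℕ) : 𝕜) • y
            = (T u - (k : 𝕜) • y) + ((T w - y) - (T w - T w')) := by
          push_cast; rw [map_add, add_smul, one_smul]; abel
        rw [this]
        calc _ ≤ ‖T u - (k : 𝕜) • y‖ + (‖T w - y‖ + ‖T w - T w'‖) :=
              (norm_add_le _ _).trans (by gcongr; exact norm_sub_le _ _)
          _ ≤ k * (δ / 2) + (δ / 4 + δ / 4) := by gcongr
          _ = _ := by push_cast; ring
  obtain ⟨k, hk⟩ := exists_nat_gt (‖T‖ / (δ / 2))
  obtain ⟨m, u, hu1, -, huT⟩ := key k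
  have h1 : ‖T u‖ ≤ ‖T‖ := by
    simpa using (T.le_opNorm u).trans (mul_le_mul_of_nonneg_left hu1 (norm_nonneg _))
  have h2 : ‖(k : 𝕜) • y‖ = k * ‖y‖ := by rw [norm_smul]; simp
  have h3 : ‖(k : 𝕜) • y‖ ≤ ‖T u‖ + ‖T u - (k : 𝕜) • y‖ := norm_le_norm_add_norm_sub _ _
  rw [div_lt_iff₀ (by positivity)] at hk
  have h4 : (k : ℝ) * δ ≤ k * ‖y‖ := by gcongr
  linarith

theorem op_tail' (T : ZeroAtInftyContinuousMap ℕ X →L[𝕜] Y) (hT : IsCompactOperator T)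
    {δ : ℝ} (hδ : 0 < δ) :
    ∃ M, ∀ m, M ≤ m → ‖T - (T.comp (extL 𝕜 X m)).comp (resL 𝕜 X m)‖ ≤ δ := by
  obtain ⟨M, hM⟩ := op_tail T hT hδ
  refine ⟨M, fun m hm => ContinuousLinearMap.opNorm_le_bound _ hδ.le fun f => ?_⟩
  set g := f - extL 𝕜 X m (resL 𝕜 X m f) with hg
  have hgn : ∀ n, g n = if n < m then 0 else f n := fun n => by
    rw [hg, ZeroAtInftyContinuousMap.sub_apply, ext_res]; split_ifs <;> simp
  have hgf : ‖g‖ ≤ ‖f‖ := (c0_norm_le_s7 _ (norm_nonneg f)).2 fun n => by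
    rw [hgn]; split_ifs
    · simp
    · exact c0_apply_le f n
  have : (T - (T.comp (extL 𝕜 X m)).comp (resL 𝕜 X m)) f = T g := by simp [hg]
  rw [this]
  by_cases hf : ‖f‖ = 0
  · have : g = 0 := norm_le_zero_iff.1 (hf ▸ hgf)
    simp [this, hf]
  have hf' : 0 < ‖f‖ := lt_of_le_of_ne (norm_nonneg _) (Ne.symm hf)
  have := hM (((‖f‖⁻¹ : ℝ) : 𝕜) • g) (by
    rw [norm_smul]; simp only [RCLike.norm_ofReal, abs_inv, abs_norm]
    rw [inv_mul_le_iff₀ hf']; simpa using hgf) (fun n hn => by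
    rw [ZeroAtInftyContinuousMap.smul_apply, hgn, if_pos (by omega), smul_zero])
  rw [map_smul, norm_smul] at this
  simp only [RCLike.norm_ofReal, abs_inv, abs_norm] at this
  rwa [inv_mul_le_iff₀ hf', mul_comm] at this

theorem dir1 (η : ℝ → ℝ) (h : BPBpCompactWith 𝕜 (ZeroAtInftyContinuousMap ℕ X) Y η) (m : ℕ) :
    BPBpCompactWith 𝕜 (PiLp ⊤ (fun _ : Fin m => X)) Y (fun ε => η (min ε (1/2))) := by
  intro ε hε
  obtain ⟨hη, H⟩ := h (min ε (1/2)) (by positivity)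
  refine ⟨hη, fun T hT hT1 x₀ hx₀ hTx => ?_⟩
  have hR1 : ‖T.comp (resL 𝕜 X m)‖ = 1 := by
    apply le_antisymm
    · calc _ ≤ ‖T‖ * ‖resL 𝕜 X m‖ := T.opNorm_comp_le _
        _ ≤ 1 * 1 := by rw [hT1]; gcongr; exact resL_norm m
        _ = 1 := by norm_num
    · rw [← hT1]
      refine ContinuousLinearMap.opNorm_le_bound T (norm_nonneg (T.comp (resL 𝕜 X m))) fun x => ?_
      have := (T.comp (resL 𝕜 X m)).le_opNorm (extL 𝕜 X m x)
      rwa [ContinuousLinearMap.comp_apply, res_ext, extL_eq] at this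
  obtain ⟨S, z, hS, hS1, hz1, hSz, hzx, hST⟩ := H (T.comp (resL 𝕜 X m)) (hT.comp_clm _) hR1
    (extL 𝕜 X m x₀) (by rw [extL_eq, hx₀]) (by
      rw [ContinuousLinearMap.comp_apply, res_ext]; exact hTx)
  have hSle : ∀ u, ‖S u‖ ≤ ‖u‖ := fun u => by simpa [hS1] using S.le_opNorm u
  have hS' : ‖S.comp (extL 𝕜 X m)‖ ≤ 1 :=
    ContinuousLinearMap.opNorm_le_bound _ zero_le_one fun x => by
      rw [one_mul, ← extL_eq (𝕜 := 𝕜)]; exact hSle _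
  have hzn : ∀ n, ‖z n‖ ≤ 1 := fun n => hz1 ▸ c0_apply_le z n
  set p := extL 𝕜 X m (resL 𝕜 X m z) with hp
  have hmid : ‖(2 : 𝕜) • z - p‖ ≤ 1 := by
    refine (c0_norm_le_s7 _ zero_le_one).2 fun n => ?_
    rw [ZeroAtInftyContinuousMap.sub_apply, ZeroAtInftyContinuousMap.smul_apply, hp, ext_res]
    split_ifs with hn
    · rw [two_smul, add_sub_cancel_right]; exact hzn n
    · have h1 := c0_apply_le (extL 𝕜 X m x₀ - z) n
      rw [ZeroAtInftyContinuousMap.sub_apply, extL_apply, dif_neg hn, zero_sub, norm_neg] at h1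
      have h2 := hzx.trans_le (min_le_right _ _)
      rw [sub_zero, norm_smul, RCLike.norm_ofNat]
      linarith
  have hSp : 1 ≤ ‖S p‖ := by
    have h1 : (2 : 𝕜) • S z = S ((2 : 𝕜) • z - p) + S p := by rw [map_sub, map_smul]; abel
    have h2 : ‖(2 : 𝕜) • S z‖ = 2 := by rw [norm_smul, hSz, RCLike.norm_ofNat, mul_one]
    have h3 := norm_add_le (S ((2 : 𝕜) • z - p)) (S p)
    rw [← h1, h2] at h3
    have := (hSle _).trans hmid
    linarith
  have hp1 : ‖resL 𝕜 X m z‖ ≤ 1 := hz1 ▸ resL_le m z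
  have hp2 : ‖S p‖ ≤ ‖resL 𝕜 X m z‖ := by
    rw [← extL_eq (𝕜 := 𝕜)]; exact hSle _
  have hSpe : ‖S p‖ = 1 := le_antisymm (hp2.trans hp1) hSp
  have hr1 : ‖resL 𝕜 X m z‖ = 1 := le_antisymm hp1 (hSp.trans hp2)
  refine ⟨S.comp (extL 𝕜 X m), resL 𝕜 X m z, hS.comp_clm _, le_antisymm hS' ?_, hr1, hSpe, ?_, ?_⟩
  · have := (S.comp (extL 𝕜 X m)).le_opNorm (resL 𝕜 X m z)
    rw [hr1, mul_one] at this
    exact hSp.trans this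
  · have := resL_le (𝕜 := 𝕜) m (extL 𝕜 X m x₀ - z)
    rw [map_sub, res_ext] at this
    exact this.trans_lt (hzx.trans_le (min_le_left _ _))
  · have : S.comp (extL 𝕜 X m) - T = (S - T.comp (resL 𝕜 X m)).comp (extL 𝕜 X m) := by
      ext x; simp [res_ext]
    rw [this]
    refine lt_of_le_of_lt ?_ (hST.trans_le (min_le_left _ _))
    refine ContinuousLinearMap.opNorm_le_bound _ (norm_nonneg _) fun x => ?_
    rw [← extL_eq (𝕜 := 𝕜) m x]
    exact (S - T.comp (resL 𝕜 X m)).le_opNorm (extL 𝕜 X m x)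

theorem dir2 (η : ℝ → ℝ) (h : ∀ m, BPBpCompactWith 𝕜 (PiLp ⊤ (fun _ : Fin m => X)) Y η) :
    BPBpCompactWith 𝕜 (ZeroAtInftyContinuousMap ℕ X) Y (fun ε => η (ε / 2)) := by
  intro ε hε
  refine ⟨(h 0 (ε / 2) (by positivity)).1, fun T hT hT1 x₀ hx₀ hTx => ?_⟩
  set γ := ‖T x₀‖ - (1 - η (ε / 2)) with hγ
  have hγ0 : 0 < γ := by simp only [hγ]; linarith
  set δ := min (min (ε / 8) (1 / 2)) (γ / 2) with hδdef
  have hδ : 0 < δ := by positivity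
  have hδ1 : δ ≤ ε / 8 := (min_le_left _ _).trans (min_le_left _ _)
  have hδ2 : δ ≤ 1 / 2 := (min_le_left _ _).trans (min_le_right _ _)
  have hδ3 : δ ≤ γ / 2 := min_le_right _ _
  obtain ⟨M1, hM1⟩ := tail_small (𝕜 := 𝕜) x₀ hδ
  obtain ⟨M2, hM2⟩ := op_tail' T hT hδ
  set m := max M1 M2 with hm
  obtain ⟨hxt, hxn⟩ := hM1 m (le_max_left _ _)
  have hTt := hM2 m (le_max_right _ _)
  set R := resL 𝕜 X m
  set E := extL 𝕜 X m
  have hRx : ‖R x₀‖ = 1 := by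
    refine le_antisymm (hx₀ ▸ resL_le m x₀) ?_
    by_contra! hlt
    have : ‖x₀‖ ≤ max ‖R x₀‖ (1/2) := by
      refine (c0_norm_le_s7 _ (by positivity)).2 fun n => ?_
      by_cases hn : n < m
      · exact (PiLp.norm_apply_le (R x₀) ⟨n, hn⟩).trans (le_max_left _ _)
      · exact ((hxn n (by omega)).trans hδ2).trans (le_max_right _ _)
    rw [hx₀] at this
    exact absurd this (not_le.2 (max_lt hlt (by norm_num)))
  set A := T.comp E with hA
  have hTle : ∀ u, ‖T u‖ ≤ ‖u‖ := fun u => by simpa [hT1] using T.le_opNorm u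
  have hA1 : ‖A‖ ≤ 1 := ContinuousLinearMap.opNorm_le_bound _ zero_le_one fun x => by
    rw [one_mul, ← extL_eq (𝕜 := 𝕜)]; exact hTle _
  have hAR : ‖A.comp R‖ ≤ ‖A‖ := ContinuousLinearMap.opNorm_le_bound _ (norm_nonneg _) fun x =>
    (A.le_opNorm _).trans (by gcongr; exact resL_le m x)
  have hA2 : 1 - δ ≤ ‖A‖ := by
    have := norm_le_norm_add_norm_sub' T (A.comp R)
    rw [hT1] at this
    linarith
  have hApos : 0 < ‖A‖ := by linarith
  set c : 𝕜 := ((‖A‖⁻¹ : ℝ) : 𝕜) with hc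
  have hcn : ‖c‖ = ‖A‖⁻¹ := by simp [hc]
  have hcA : ‖c • A‖ = 1 := by rw [norm_smul, hcn, inv_mul_cancel₀ hApos.ne']
  have hcA' : ‖c • A - A‖ ≤ δ := by
    have : c • A - A = (((‖A‖⁻¹ - 1 : ℝ)) : 𝕜) • A := by
      rw [RCLike.ofReal_sub, sub_smul, RCLike.ofReal_one, one_smul]
    rw [this, norm_smul, RCLike.norm_ofReal, abs_of_nonneg (by
      rw [sub_nonneg]; exact (one_le_inv₀ hApos).2 hA1), sub_mul, inv_mul_cancel₀ hApos.ne']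
    linarith
  have hAx : 1 - η (ε / 2) < ‖(c • A) (R x₀)‖ := by
    have h1 : ‖T x₀ - A (R x₀)‖ ≤ δ := by
      have : T x₀ - A (R x₀) = T (x₀ - E (R x₀)) := by simp [hA]
      rw [this]
      exact (hTle _).trans hxt
    have h2 := norm_le_norm_add_norm_sub' (T x₀) (A (R x₀))
    have h3 : ‖A (R x₀)‖ ≤ ‖(c • A) (R x₀)‖ := by
      rw [ContinuousLinearMap.smul_apply, norm_smul, hcn]
      exact le_mul_of_one_le_left (norm_nonneg _) ((one_le_inv₀ hApos).2 hA1)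
    simp only [hγ] at hδ3 hγ0
    linarith
  obtain ⟨S, z, hS, hS1, hz1, hSz, hzx, hST⟩ := (h m (ε / 2) (by positivity)).2 (c • A)
    (IsCompactOperator.smul (hT.comp_clm E) c) hcA (R x₀) hRx hAx
  have hSE : (S.comp R) (E z) = S z := by
    rw [ContinuousLinearMap.comp_apply, res_ext]
  have hcomp : ∀ B : PiLp ⊤ (fun _ : Fin m => X) →L[𝕜] Y, ‖B.comp R‖ ≤ ‖B‖ := fun B =>
    ContinuousLinearMap.opNorm_le_bound _ (norm_nonneg _) fun x =>
      (B.le_opNorm _).trans (by gcongr; exact resL_le m x)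
  have hEz : ‖E z‖ = 1 := by rw [extL_eq, hz1]
  refine ⟨S.comp R, E z, hS.comp_clm R, le_antisymm (hS1 ▸ hcomp S) ?_, hEz, by rw [hSE, hSz], ?_, ?_⟩
  · have := (S.comp R).le_opNorm (E z)
    rwa [hSE, hSz, hEz, mul_one] at this
  · have : x₀ - E z = (x₀ - E (R x₀)) + E (R x₀ - z) := by rw [map_sub]; abel
    rw [this]
    have h1 := norm_add_le (x₀ - E (R x₀)) (E (R x₀ - z))
    rw [extL_eq] at h1
    linarith
  · have : S.comp R - T = (S - c • A).comp R + ((c • A - A).comp R - (T - A.comp R)) := by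
      ext x; simp
    rw [this]
    have h1 := norm_add_le ((S - c • A).comp R) ((c • A - A).comp R - (T - A.comp R))
    have h2 := norm_sub_le ((c • A - A).comp R) (T - A.comp R)
    have h3 := hcomp (S - c • A)
    have h4 := hcomp (c • A - A)
    linarith

end aux

/-- Lemma 3.2: (c₀(X), Y) has the BPBp for compact operators iff the pairs (ℓ∞^m(X), Y)
have it with a common function η. -/
theorem bpbp_compact_c0X_iff {𝕜 : Type*} [RCLike 𝕜] {X Y : Type*}
    [NormedAddCommGroup X] [NormedSpace 𝕜 X] [CompleteSpace X]
    [NormedAddCommGroup Y] [NormedSpace 𝕜 Y] [CompleteSpace Y] :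
    BPBpCompact 𝕜 (ZeroAtInftyContinuousMap ℕ X) Y ↔
      ∃ η : ℝ → ℝ, ∀ m : ℕ, BPBpCompactWith 𝕜 (PiLp ⊤ (fun _ : Fin m => X)) Y η := by
  constructor
  · rintro ⟨η, h⟩
    exact ⟨_, fun m => dir1 η h m⟩
  · rintro ⟨η, h⟩
    exact ⟨_, dir2 η h⟩
end
end

section
/- Let (Ω, Σ, μ) be a measure space and let X and Y be finite-dimensional Banach spaces. Then the pair (L₁(μ, X), Y) has the BPBp for compact operators. -/
open MeasureTheory

noncomputable section

lemma rn_vec {E : Type*} [NormedAddCommGroup E] [NormedSpace ℝ E] [FiniteDimensional ℝ E]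
    {Ω : Type*} [MeasurableSpace Ω] (ν : Measure Ω) [IsFiniteMeasure ν] (M : Set Ω → E)
    (hM : ∀ s, ‖M s‖ₑ ≤ ν s)
    (hadd : ∀ s t, MeasurableSet s → MeasurableSet t → Disjoint s t → M (s ∪ t) = M s + M t)
    (hnm : ∀ s, ¬ MeasurableSet s → M s = 0) :
    ∃ g : Ω → E, StronglyMeasurable g ∧ (∀ ω, ‖g ω‖ ≤ 1) ∧
      ∀ s, MeasurableSet s → ∫ ω in s, g ω ∂ν = M s := by
  have : CompleteSpace E := FiniteDimensional.complete ℝ E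
  let V : VectorMeasure Ω E := VectorMeasure.of_additive_of_le_measure (μ := ν) M hM hadd hnm
  have hV : ∀ s, V s = M s := fun s => rfl
  let b := Module.finBasis ℝ E
  let c : ∀ i, E →L[ℝ] ℝ := fun i => LinearMap.toContinuousLinearMap (b.coord i)
  let W : ∀ i, SignedMeasure Ω := fun i => V.mapRange (c i : E →+ ℝ) (c i).continuous
  have hW : ∀ i s, W i s = c i (M s) := fun i s => rfl
  have hac : ∀ i, (W i) ≪ᵥ ν.toENNRealVectorMeasure := by
    intro i
    refine VectorMeasure.AbsolutelyContinuous.mk fun s hs h => ?_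
    rw [Measure.toENNRealVectorMeasure_apply_measurable hs] at h
    have := hM s
    rw [h] at this
    have : M s = 0 := by simpa using this
    rw [hW, this, map_zero]
  let g0 : Ω → E := fun ω => ∑ i, (W i).rnDeriv ν ω • b i
  have hint : ∀ i, Integrable (fun ω => (W i).rnDeriv ν ω • b i) ν := fun i =>
    (SignedMeasure.integrable_rnDeriv (W i) ν).smul_const (b i)
  have hg0 : Integrable g0 ν := integrable_finsetSum _ fun i _ => hint i
  have hg0s : ∀ s, MeasurableSet s → ∫ ω in s, g0 ω ∂ν = M s := by
    intro s hs
    rw [integral_finsetSum _ fun i _ => (hint i).integrableOn]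
    simp_rw [integral_smul_const]
    rw [← b.sum_repr (M s)]
    refine Finset.sum_congr rfl fun i _ => ?_
    congr 1
    rw [← withDensityᵥ_apply (SignedMeasure.integrable_rnDeriv (W i) ν) hs,
      SignedMeasure.withDensityᵥ_rnDeriv_eq _ _ (hac i)]
    simp [hW, c]
  have hg0m : StronglyMeasurable g0 :=
    Finset.stronglyMeasurable_fun_sum _ fun i _ =>
      ((SignedMeasure.measurable_rnDeriv (W i) ν).stronglyMeasurable.smul_const (b i))
  have hbd : ∀ᵐ ω ∂ν, ‖g0 ω‖ₑ ≤ 1 := by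
    have h1 : (ν.withDensityᵥ g0).variation ≤ ν := by
      apply VectorMeasure.variation_le_of_forall_enorm_le
      intro s hs
      rw [withDensityᵥ_apply hg0 hs, hg0s s hs]
      exact hM s
    rw [Measure.variation_withDensityᵥ hg0] at h1
    refine ae_le_of_forall_setLIntegral_le_of_sigmaFinite hg0m.enorm fun s hs _ => ?_
    rw [← withDensity_apply _ hs]
    simpa using h1 s
  have hms : MeasurableSet {ω | ‖g0 ω‖ ≤ 1} := hg0m.norm.measurable measurableSet_Iic
  refine ⟨Set.indicator {ω | ‖g0 ω‖ ≤ 1} g0, hg0m.indicator hms, fun ω => ?_, fun s hs => ?_⟩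
  · by_cases h : ‖g0 ω‖ ≤ 1
    · rw [Set.indicator_of_mem (by exact h)]; exact h
    · rw [Set.indicator_of_notMem (by exact h)]; simp
  · rw [← hg0s s hs]
    apply integral_congr_ae
    refine ae_restrict_of_ae ?_
    filter_upwards [hbd] with ω h
    rw [Set.indicator_of_mem]
    have := ENNReal.toReal_mono ENNReal.one_ne_top h
    simpa using this

section
variable {𝕜 : Type*} [RCLike 𝕜] {X Y : Type*}
    [NormedAddCommGroup X] [NormedSpace 𝕜 X]
    [NormedAddCommGroup Y] [NormedSpace 𝕜 Y]
    {Ω : Type*} [MeasurableSpace Ω] {μ : Measure Ω}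

lemma integrable_app {g : Ω → X →L[𝕜] Y} (hg : StronglyMeasurable g) {C : ℝ}
    (hC : ∀ ω, ‖g ω‖ ≤ C) {f : Ω → X} (hf : Integrable f μ) :
    Integrable (fun ω => g ω (f ω)) μ :=
  (ContinuousLinearMap.id 𝕜 (X →L[𝕜] Y)).integrable_of_bilin_of_bdd_left C
    hg.aestronglyMeasurable (Filter.Eventually.of_forall hC) hf

lemma exists_op [NormedSpace ℝ Y] [IsScalarTower ℝ 𝕜 Y]
    {g : Ω → X →L[𝕜] Y} (hg : StronglyMeasurable g) {C : ℝ} (hC0 : 0 ≤ C)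
    (hC : ∀ ω, ‖g ω‖ ≤ C) :
    ∃ I : Lp X 1 μ →L[𝕜] Y, (∀ f : Lp X 1 μ, I f = ∫ ω, g ω (f ω) ∂μ) ∧ ‖I‖ ≤ C := by
  let L : Lp X 1 μ →ₗ[𝕜] Y :=
    { toFun := fun f => ∫ ω, g ω (f ω) ∂μ
      map_add' := by
        intro f h
        rw [← integral_add (integrable_app hg hC (L1.integrable_coeFn f))
          (integrable_app hg hC (L1.integrable_coeFn h))]
        apply integral_congr_ae
        filter_upwards [Lp.coeFn_add f h] with ω h1
        rw [h1]; simp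
      map_smul' := by
        intro c f
        rw [RingHom.id_apply, ← integral_smul]
        apply integral_congr_ae
        filter_upwards [Lp.coeFn_smul c f] with ω h1
        rw [h1]; simp }
  refine ⟨L.mkContinuous C fun f => ?_, fun f => rfl, LinearMap.mkContinuous_norm_le _ hC0 _⟩
  rw [L1.norm_eq_integral_norm, ← integral_const_mul]
  refine norm_integral_le_of_norm_le ((L1.integrable_coeFn f).norm.const_mul C) ?_
  refine Filter.Eventually.of_forall fun ω => ?_
  exact (g ω).le_of_opNorm_le (hC ω) _

lemma exists_J {A : Set Ω} (hA : MeasurableSet A) :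
    ∃ J : Lp X 1 μ →L[𝕜] Lp X 1 μ, ∀ f : Lp X 1 μ, J f =ᵐ[μ] A.indicator f := by
  have hm : ∀ f : Lp X 1 μ, MemLp (A.indicator f) 1 μ := fun f => (Lp.memLp f).indicator hA
  let L : Lp X 1 μ →ₗ[𝕜] Lp X 1 μ :=
    { toFun := fun f => (hm f).toLp _
      map_add' := by
        intro f h
        rw [← MemLp.toLp_add]
        apply MemLp.toLp_congr
        filter_upwards [Lp.coeFn_add f h] with ω h1
        by_cases hω : ω ∈ A
        · simpa only [Set.indicator_of_mem hω, Pi.add_apply] using h1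
        · simp [hω]
      map_smul' := by
        intro c f
        rw [RingHom.id_apply, ← MemLp.toLp_const_smul]
        apply MemLp.toLp_congr
        filter_upwards [Lp.coeFn_smul c f] with ω h1
        by_cases hω : ω ∈ A
        · simpa only [Set.indicator_of_mem hω, Pi.smul_apply] using h1
        · simp [hω] }
  have hL : ∀ f, L f = (hm f).toLp _ := fun f => rfl
  have hL' : ∀ f, L f =ᵐ[μ] A.indicator f := fun f => by rw [hL]; exact MemLp.coeFn_toLp (hm f)
  refine ⟨L.mkContinuous 1 fun f => ?_, fun f => ?_⟩
  · rw [one_mul]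
    apply Lp.norm_le_norm_of_ae_le
    filter_upwards [hL' f] with ω h1
    rw [h1]
    exact norm_indicator_le_norm_self _ _
  · rw [LinearMap.mkContinuous_apply]; exact hL' f

lemma rep [FiniteDimensional 𝕜 X] [FiniteDimensional 𝕜 Y] [NormedSpace ℝ Y] [IsScalarTower ℝ 𝕜 Y]
    (T : Lp X 1 μ →L[𝕜] Y) (hT : ‖T‖ ≤ 1) {A : Set Ω} (hA : MeasurableSet A) (hμA : μ A ≠ ⊤) :
    ∃ g : Ω → X →L[𝕜] Y, StronglyMeasurable g ∧ (∀ ω, ‖g ω‖ ≤ 1) ∧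
      ∀ f : Lp X 1 μ, (∀ᵐ ω ∂μ, ω ∉ A → f ω = 0) → T f = ∫ ω, g ω (f ω) ∂μ := by
  classical
  have : FiniteDimensional ℝ (X →L[𝕜] Y) := FiniteDimensional.trans ℝ 𝕜 _
  have : CompleteSpace Y := FiniteDimensional.complete 𝕜 Y
  have : IsFiniteMeasure (μ.restrict A) := ⟨by simpa using hμA.lt_top⟩
  have hfin : ∀ s, μ (s ∩ A) ≠ ⊤ := fun s => measure_ne_top_of_subset Set.inter_subset_right hμA
  let ind : ∀ s, MeasurableSet s → X → Lp X 1 μ := fun s hs x =>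
    indicatorConstLp 1 (hs.inter hA) (hfin s) x
  have hindn : ∀ s hs x, ‖ind s hs x‖ ≤ μ.real (s ∩ A) * ‖x‖ := by
    intro s hs x
    have := norm_indicatorConstLp_le (p := 1) (hs := hs.inter hA) (hμs := hfin s) (c := x)
    simpa [mul_comm] using this
  let m : ∀ s, MeasurableSet s → X →L[𝕜] Y := fun s hs =>
    LinearMap.mkContinuous
    { toFun := fun x => T (ind s hs x)
      map_add' := fun x y => by
        rw [← map_add]; congr 1; exact (indicatorConstLp_add).symm
      map_smul' := fun c x => by
        rw [RingHom.id_apply, ← map_smul]; congr 1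
        apply Lp.ext
        filter_upwards [Lp.coeFn_smul c (ind s hs x),
          indicatorConstLp_coeFn (p := 1) (hs := hs.inter hA) (hμs := hfin s) (c := x),
          indicatorConstLp_coeFn (p := 1) (hs := hs.inter hA) (hμs := hfin s) (c := c • x)]
          with ω h1 h2 h3
        rw [h1, Pi.smul_apply, h3, h2]
        by_cases hω : ω ∈ s ∩ A <;> simp only [hω, Set.indicator_of_mem, Set.indicator_of_notMem,
          not_false_eq_true, smul_zero] }
    (μ.real (s ∩ A)) (fun x => by
      refine (T.le_of_opNorm_le hT _).trans ?_
      rw [one_mul]; exact hindn s hs x)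
  have hmapp : ∀ s hs x, m s hs x = T (ind s hs x) := fun s hs x => rfl
  let M : Set Ω → X →L[𝕜] Y := fun s => if hs : MeasurableSet s then m s hs else 0
  have hMs : ∀ s (hs : MeasurableSet s), M s = m s hs := fun s hs => dif_pos hs
  obtain ⟨g, hgm, hg1, hgs⟩ := rn_vec (μ.restrict A) M
    (by
      intro s
      by_cases hs : MeasurableSet s
      · rw [hMs s hs, Measure.restrict_apply hs, ← ofReal_norm,
          ← ENNReal.ofReal_toReal (hfin s)]
        apply ENNReal.ofReal_le_ofReal
        exact LinearMap.mkContinuous_norm_le _ ENNReal.toReal_nonneg _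
      · rw [show M s = 0 from dif_neg hs]; exact (enorm_zero (E := X →L[𝕜] Y)).le.trans bot_le)
    (by
      intro s t hs ht hst
      rw [hMs s hs, hMs t ht, hMs _ (hs.union ht)]
      ext x
      rw [_root_.add_apply, hmapp s hs, hmapp t ht, hmapp _ (hs.union ht), ← map_add]
      congr 1
      apply Lp.ext
      filter_upwards [Lp.coeFn_add (ind s hs x) (ind t ht x),
          indicatorConstLp_coeFn (p := 1) (hs := hs.inter hA) (hμs := hfin s) (c := x),
          indicatorConstLp_coeFn (p := 1) (hs := ht.inter hA) (hμs := hfin t) (c := x),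
          indicatorConstLp_coeFn (p := 1) (hs := (hs.union ht).inter hA) (hμs := hfin _) (c := x)]
          with ω h1 h2 h3 h4
      rw [h1, Pi.add_apply, h4, h2, h3]
      have hdis : ω ∈ s → ω ∉ t := fun h => Set.disjoint_left.1 hst h
      by_cases hω : ω ∈ s <;> by_cases hω' : ω ∈ t <;> by_cases hω'' : ω ∈ A <;>
        simp_all [Set.indicator])
    (fun s hs => dif_neg hs)
  obtain ⟨I, hI, -⟩ := exists_op (μ := μ) hgm zero_le_one hg1
  obtain ⟨J, hJ⟩ := exists_J (𝕜 := 𝕜) (X := X) (μ := μ) hA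
  have key : ∀ f, T (J f) = I (J f) := by
    intro f
    induction f using Lp.induction ENNReal.one_ne_top with
    | @indicatorConst c s hs hμs =>
      have e1 : J (Lp.simpleFunc.indicatorConst 1 hs hμs.ne c : Lp X 1 μ) = ind s hs c := by
        apply Lp.ext
        rw [Lp.simpleFunc.coe_indicatorConst]
        filter_upwards [hJ (indicatorConstLp 1 hs hμs.ne c),
          indicatorConstLp_coeFn (p := 1) (hs := hs.inter hA) (hμs := hfin s) (c := c),
          indicatorConstLp_coeFn (p := 1) (hs := hs) (hμs := hμs.ne) (c := c)] with ω h1 h2 h3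
        rw [h1, h2]
        by_cases hω : ω ∈ s <;> by_cases hω'' : ω ∈ A <;> simp_all [Set.indicator]
      rw [e1, ← hmapp s hs, ← hMs s hs, ← hgs s hs, hI, ContinuousLinearMap.integral_apply,
        Measure.restrict_restrict hs, ← integral_indicator (hs.inter hA)]
      · apply integral_congr_ae
        filter_upwards [indicatorConstLp_coeFn (p := 1) (hs := hs.inter hA) (hμs := hfin s) (c := c)]
          with ω h2
        rw [h2]
        by_cases hω : ω ∈ s <;> by_cases hω'' : ω ∈ A <;> simp_all [Set.indicator]
      · exact (Integrable.of_bound hgm.aestronglyMeasurable 1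
          (Filter.Eventually.of_forall hg1)).integrableOn
    | add hf hg _ h1 h2 => rw [map_add, map_add, map_add, h1, h2]
    | isClosed => exact isClosed_eq (T.continuous.comp J.continuous) (I.continuous.comp J.continuous)
  refine ⟨g, hgm, hg1, fun f hf => ?_⟩
  have : J f = f := by
    apply Lp.ext
    filter_upwards [hJ f, hf] with ω h1 h2
    rw [h1]
    by_cases hω : ω ∈ A <;> simp_all [Set.indicator]
  rw [← hI, ← this, key, this]

lemma pointwise [FiniteDimensional 𝕜 X] [FiniteDimensional 𝕜 Y]
    (y : Y →L[𝕜] 𝕜) (hy : ‖y‖ ≤ 1) {e : ℝ} (he : 0 < e) :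
    ∃ η : ℝ, 0 < η ∧ ∀ (B : X →L[𝕜] Y) (x : X), ‖B‖ ≤ 1 → ‖x‖ = 1 →
      1 - η ≤ RCLike.re (y (B x)) → ∃ (B' : X →L[𝕜] Y) (x' : X), ‖B'‖ ≤ 1 ∧ ‖x'‖ = 1 ∧
        RCLike.re (y (B' x')) = 1 ∧ ‖B' - B‖ ≤ e ∧ ‖x' - x‖ ≤ e := by
  have : ProperSpace X := FiniteDimensional.proper 𝕜 X
  have : ProperSpace (X →L[𝕜] Y) := FiniteDimensional.proper 𝕜 _
  let K : Set ((X →L[𝕜] Y) × X) := Metric.closedBall 0 1 ×ˢ Metric.sphere 0 1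
  have hK : IsCompact K := (isCompact_closedBall _ _).prod (isCompact_sphere _ _)
  let F : (X →L[𝕜] Y) × X → ℝ := fun p => RCLike.re (y (p.1 p.2))
  have hF : Continuous F := by
    apply RCLike.continuous_re.comp
    apply y.continuous.comp
    exact isBoundedBilinearMap_apply.continuous
  have hF1 : ∀ p ∈ K, F p ≤ 1 := by
    rintro ⟨B, x⟩ ⟨h1, h2⟩
    simp only [Metric.mem_closedBall, dist_zero_right, mem_sphere_iff_norm, sub_zero] at h1 h2
    calc F (B, x) ≤ ‖y (B x)‖ := RCLike.re_le_norm _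
      _ ≤ 1 * ‖B x‖ := y.le_of_opNorm_le hy _
      _ ≤ 1 * (1 * ‖x‖) := by gcongr; exact B.le_of_opNorm_le h1 _
      _ = 1 := by rw [h2]; norm_num
  let Z := {p ∈ K | F p = 1}
  let K' := K \ Metric.thickening e Z
  have hK' : IsCompact K' := hK.diff Metric.isOpen_thickening
  have main : ∃ η > 0, ∀ p ∈ K', F p < 1 - η := by
    rcases K'.eq_empty_or_nonempty with h | h
    · exact ⟨1, one_pos, by simp [h]⟩
    · obtain ⟨p, hp, hmax⟩ := hK'.exists_isMaxOn h hF.continuousOn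
      have : F p < 1 := by
        refine lt_of_le_of_ne (hF1 p hp.1) fun h1 => hp.2 ?_
        exact Metric.self_subset_thickening he Z ⟨hp.1, h1⟩
      refine ⟨(1 - F p) / 2, by linarith, fun q hq => ?_⟩
      have := hmax hq
      simp only [Set.mem_ofPred_eq] at this
      linarith
  obtain ⟨η, hη, h⟩ := main
  refine ⟨η, hη, fun B x hB hx hBx => ?_⟩
  have hm : (B, x) ∈ K := ⟨by simpa using hB, by simpa using hx⟩
  have : (B, x) ∈ Metric.thickening e Z := by
    by_contra hc
    have := h (B, x) ⟨hm, hc⟩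
    exact absurd hBx (not_le.2 this)
  obtain ⟨⟨B', x'⟩, ⟨hz1, hz2⟩, hd⟩ := Metric.mem_thickening_iff.1 this
  rw [Prod.dist_eq, max_lt_iff] at hd
  refine ⟨B', x', by simpa using hz1.1, by simpa using hz1.2, hz2, ?_, ?_⟩
  · rw [← dist_eq_norm, dist_comm]; exact hd.1.le
  · rw [← dist_eq_norm, dist_comm]; exact hd.2.le

lemma pointwise' [FiniteDimensional 𝕜 X] [FiniteDimensional 𝕜 Y]
    (y : Y →L[𝕜] 𝕜) (hy : ‖y‖ ≤ 1) {e : ℝ} (he : 0 < e) :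
    ∃ η : ℝ, 0 < η ∧ ∀ (B : X →L[𝕜] Y) (x : X), ‖B‖ ≤ 1 → x ≠ 0 →
      (1 - η) * ‖x‖ ≤ RCLike.re (y (B x)) →
        ∃ (B' : X →L[𝕜] Y) (x' : X), ‖B'‖ ≤ 1 ∧ ‖x'‖ = ‖x‖ ∧
        RCLike.re (y (B' x')) = ‖x‖ ∧ ‖B' - B‖ ≤ e ∧ ‖x' - x‖ ≤ e * ‖x‖ := by
  obtain ⟨η, hη, h⟩ := pointwise (X := X) y hy he
  refine ⟨η, hη, fun B x hB hx hBx => ?_⟩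
  have hx0 : 0 < ‖x‖ := norm_pos_iff.2 hx
  have hne : (‖x‖ : 𝕜) ≠ 0 := by exact_mod_cast hx0.ne'
  have hre : ∀ (C : X →L[𝕜] Y) (r : ℝ) (z : X),
      RCLike.re (y (C ((r : 𝕜) • z))) = r * RCLike.re (y (C z)) := by
    intro C r z
    rw [map_smul, map_smul, smul_eq_mul, RCLike.re_ofReal_mul]
  obtain ⟨B', x', h1, h2, h3, h4, h5⟩ := h B (((‖x‖⁻¹ : ℝ) : 𝕜) • x) hB
    (by rw [norm_smul, RCLike.norm_ofReal, abs_of_pos (inv_pos.2 hx0), inv_mul_cancel₀ hx0.ne'])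
    (by rw [hre, ← div_eq_inv_mul, le_div_iff₀ hx0]; exact hBx)
  refine ⟨B', (‖x‖ : 𝕜) • x', h1, ?_, ?_, h4, ?_⟩
  · rw [norm_smul, h2]; simp
  · rw [hre, h3, mul_one]
  · have : (‖x‖ : 𝕜) • x' - x = (‖x‖ : 𝕜) • (x' - ((‖x‖⁻¹ : ℝ) : 𝕜) • x) := by
      rw [smul_sub, smul_smul]; push_cast; rw [mul_inv_cancel₀ hne, one_smul]
    rw [this, norm_smul, mul_comm]
    simp only [RCLike.norm_ofReal, abs_norm]
    gcongr

/-- Finite-valued uniform approximation of a function with values in a compact ball. -/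
lemma simple_approx {E : Type*} [NormedAddCommGroup E] [ProperSpace E]
    {g : Ω → E} (hg : StronglyMeasurable g) (h1 : ∀ ω, ‖g ω‖ ≤ 1) {δ : ℝ} (hδ : 0 < δ) :
    ∃ N : SimpleFunc Ω E, ∀ ω, ‖N ω‖ ≤ 1 ∧ ‖N ω - g ω‖ ≤ δ := by
  classical
  borelize E
  obtain ⟨t, htK, htf, hcov⟩ := (isCompact_closedBall (0 : E) 1).finite_cover_balls hδ
  suffices H : ∀ t : Finset E, (∀ x ∈ t, ‖x‖ ≤ 1) → ∃ N : SimpleFunc Ω E, ∀ ω, ‖N ω‖ ≤ 1 ∧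
      ((∃ x ∈ t, ‖x - g ω‖ ≤ δ) → ‖N ω - g ω‖ ≤ δ) by
    obtain ⟨N, hN⟩ := H htf.toFinset (fun x hx => by simpa using htK (htf.mem_toFinset.1 hx))
    refine ⟨N, fun ω => ⟨(hN ω).1, (hN ω).2 ?_⟩⟩
    have := hcov (show g ω ∈ Metric.closedBall (0 : E) 1 by simpa using h1 ω)
    simp only [Set.mem_iUnion] at this
    obtain ⟨x, hx, hd⟩ := this
    refine ⟨x, htf.mem_toFinset.2 hx, ?_⟩
    rw [norm_sub_rev, ← dist_eq_norm]
    exact (Metric.mem_ball.1 hd).le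
  intro t
  induction t using Finset.induction_on with
  | empty => intro _; exact ⟨SimpleFunc.const Ω 0, fun ω => by simp⟩
  | insert a t _ ih =>
    intro ht
    obtain ⟨N, hN⟩ := ih fun x hx => ht x (Finset.mem_insert_of_mem hx)
    have hm : MeasurableSet {ω | ‖a - g ω‖ ≤ δ} :=
      (stronglyMeasurable_const.sub hg).norm.measurable measurableSet_Iic
    refine ⟨SimpleFunc.piecewise _ hm (SimpleFunc.const Ω a) N, fun ω => ?_⟩
    by_cases h : ‖a - g ω‖ ≤ δ
    · rw [SimpleFunc.piecewise_apply, if_pos (by exact h)]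
      exact ⟨ht a (Finset.mem_insert_self _ _), fun _ => h⟩
    · rw [SimpleFunc.piecewise_apply, if_neg (by exact h)]
      refine ⟨(hN ω).1, ?_⟩
      rintro ⟨x, hx, hxd⟩
      rcases Finset.mem_insert.1 hx with rfl | hx
      · exact absurd hxd h
      · exact (hN ω).2 ⟨x, hx, hxd⟩

lemma main_fixed [FiniteDimensional 𝕜 X] [FiniteDimensional 𝕜 Y]
    [NormedSpace ℝ Y] [IsScalarTower ℝ 𝕜 Y]
    (y : Y →L[𝕜] 𝕜) (hy : ‖y‖ ≤ 1) {ε : ℝ} (hε : 0 < ε) :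
    ∃ η : ℝ, 0 < η ∧ ∀ T : Lp X 1 μ →L[𝕜] Y, ‖T‖ = 1 → ∀ x₀ : Lp X 1 μ, ‖x₀‖ = 1 →
      1 - η < RCLike.re (y (T x₀)) → ∃ (S : Lp X 1 μ →L[𝕜] Y) (x₁ : Lp X 1 μ),
        ‖S‖ = 1 ∧ ‖x₁‖ = 1 ∧ ‖S x₁‖ = 1 ∧ ‖x₀ - x₁‖ < ε ∧ ‖S - T‖ < ε := by
  classical
  have : ProperSpace (X →L[𝕜] Y) := FiniteDimensional.proper 𝕜 _
  have : CompleteSpace Y := FiniteDimensional.complete 𝕜 Y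
  obtain ⟨e, he, he1, heε⟩ : ∃ e : ℝ, 0 < e ∧ e ≤ 1 / 10 ∧ 10 * e ≤ ε :=
    ⟨min ε 1 / 10, by positivity, by linarith [min_le_right ε 1], by linarith [min_le_left ε 1]⟩
  obtain ⟨η₁, hη₁, hη₁1, hpt⟩ : ∃ η : ℝ, 0 < η ∧ η ≤ 1 ∧
      ∀ (B : X →L[𝕜] Y) (x : X), ‖B‖ ≤ 1 → x ≠ 0 →
      (1 - η) * ‖x‖ ≤ RCLike.re (y (B x)) →
        ∃ (B' : X →L[𝕜] Y) (x' : X), ‖B'‖ ≤ 1 ∧ ‖x'‖ = ‖x‖ ∧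
        RCLike.re (y (B' x')) = ‖x‖ ∧ ‖B' - B‖ ≤ e ∧ ‖x' - x‖ ≤ e * ‖x‖ := by
    obtain ⟨η, hη, h⟩ := pointwise' (X := X) y hy he
    refine ⟨min η 1, by positivity, min_le_right _ _, fun B x hB hx hBx => h B x hB hx ?_⟩
    refine le_trans ?_ hBx
    gcongr
    exact min_le_left _ _
  obtain ⟨η, hη, hηe, hηη⟩ : ∃ η : ℝ, 0 < η ∧ η ≤ e ∧ 6 * η = η₁ * e :=
    ⟨η₁ * e / 6, by positivity, by nlinarith, by ring⟩
  obtain ⟨δ, hδ, hδe, hδη⟩ : ∃ δ : ℝ, 0 < δ ∧ δ ≤ e ∧ δ ≤ η₁ / 2 :=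
    ⟨min e (η₁ / 2), by positivity, min_le_left _ _, min_le_right _ _⟩
  refine ⟨η, hη, fun T hT x₀ hx₀ hTx => ?_⟩
  let ry : Y →L[ℝ] ℝ := RCLike.reCLM.comp (y.restrictScalars ℝ)
  have hry : ∀ z, ry z = RCLike.re (y z) := fun z => rfl
  have hryle : ∀ z, ry z ≤ ‖z‖ := fun z => by
    rw [hry]
    refine (RCLike.re_le_norm _).trans ?_
    simpa using y.le_of_opNorm_le hy z
  -- simple approximation of the point
  obtain ⟨s, hs1, hsm⟩ := (Lp.memLp x₀).exists_simpleFunc_eLpNorm_sub_lt ENNReal.one_ne_top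
    (ε := ENNReal.ofReal η) (by simpa using hη)
  have hsI : Integrable s μ := memLp_one_iff_integrable.1 hsm
  let sL : Lp X 1 μ := hsm.toLp s
  have hsL : sL =ᵐ[μ] s := hsm.coeFn_toLp
  have hx0s : ‖x₀ - sL‖ < η := by
    rw [Lp.norm_def]
    apply ENNReal.toReal_lt_of_lt_ofReal
    refine lt_of_eq_of_lt (eLpNorm_congr_ae ?_) hs1
    filter_upwards [Lp.coeFn_sub x₀ sL, hsL] with ω h1 h2
    rw [h1, Pi.sub_apply, Pi.sub_apply, h2]
  have ha : ‖sL‖ = ∫ ω, ‖s ω‖ ∂μ := by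
    rw [L1.norm_eq_integral_norm]
    apply integral_congr_ae
    filter_upwards [hsL] with ω h1
    rw [h1]
  obtain ⟨g, hgm, hg1, hg⟩ := rep T hT.le s.measurableSet_support
    (s.measure_support_lt_top_of_integrable hsI).ne
  obtain ⟨N, hN⟩ := simple_approx hgm hg1 hδ
  have hTs : T sL = ∫ ω, g ω (s ω) ∂μ := by
    rw [hg]
    · apply integral_congr_ae
      filter_upwards [hsL] with ω h1
      rw [h1]
    · filter_upwards [hsL] with ω h1 h2
      rw [h1]; simpa using h2
  -- selection
  let Q : SimpleFunc Ω ((X →L[𝕜] Y) × X) := N.pair s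
  let P : (X →L[𝕜] Y) × X → Prop := fun p =>
    p.2 ≠ 0 ∧ (1 - η₁) * ‖p.2‖ ≤ RCLike.re (y (p.1 p.2))
  have hsel : ∀ p : (X →L[𝕜] Y) × X, ∃ q : (X →L[𝕜] Y) × X, ‖p.1‖ ≤ 1 → P p →
      ‖q.1‖ ≤ 1 ∧ ‖q.2‖ = ‖p.2‖ ∧ RCLike.re (y (q.1 q.2)) = ‖p.2‖ ∧ ‖q.1 - p.1‖ ≤ e ∧
        ‖q.2 - p.2‖ ≤ e * ‖p.2‖ := by
    intro p
    by_cases h : ‖p.1‖ ≤ 1 ∧ P p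
    · obtain ⟨B', x', hh⟩ := hpt p.1 p.2 h.1 h.2.1 h.2.2
      exact ⟨(B', x'), fun _ _ => hh⟩
    · exact ⟨0, fun h1 h2 => absurd ⟨h1, h2⟩ h⟩
  choose Φ hΦ using hsel
  let G : Set Ω := {ω | P (N ω, s ω)}
  have hGm : MeasurableSet G := Q.measurableSet_preimage {p | P p}
  let β : SimpleFunc Ω (X →L[𝕜] Y) := Q.map fun p => (Φ p).1
  let W : SimpleFunc Ω X := Q.map fun p => if P p then (Φ p).2 else 0
  have hWn : ∀ ω, ω ∉ G → W ω = 0 := fun ω h => if_neg h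
  have hWp : ∀ ω, ω ∈ G → W ω = (Φ (N ω, s ω)).2 := fun ω h => if_pos h
  have hβ : ∀ ω, β ω = (Φ (N ω, s ω)).1 := fun ω => rfl
  have hG : ∀ ω, ω ∈ G → ‖β ω‖ ≤ 1 ∧ ‖W ω‖ = ‖s ω‖ ∧ ry (β ω (W ω)) = ‖s ω‖ ∧
      ‖β ω - N ω‖ ≤ e ∧ ‖W ω - s ω‖ ≤ e * ‖s ω‖ := by
    intro ω h
    rw [hWp ω h, hβ, hry]
    exact hΦ (N ω, s ω) (hN ω).1 h
  have hGs : ∀ ω, ω ∈ G → s ω ≠ 0 := fun ω h => h.1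
  have hGiff : ∀ ω, s ω ≠ 0 → (1 - η₁) * ‖s ω‖ ≤ ry (N ω (s ω)) → ω ∈ G := fun ω h1 h2 => ⟨h1, h2⟩
  clear_value W β G
  have hWs : ∀ ω, ‖W ω‖ ≤ ‖s ω‖ := by
    intro ω
    by_cases h : ω ∈ G
    · exact (hG ω h).2.1.le
    · rw [hWn ω h]; simp
  have hWI : Integrable W μ := hsI.norm.mono' W.aestronglyMeasurable
    (Filter.Eventually.of_forall hWs)
  let h : Ω → X →L[𝕜] Y := G.indicator fun ω => β ω - g ω
  have hhG : ∀ ω, ω ∈ G → h ω = β ω - g ω := fun ω hω => Set.indicator_of_mem hω _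
  have hhn : ∀ ω, ω ∉ G → h ω = 0 := fun ω hω => Set.indicator_of_notMem hω _
  have hhm : StronglyMeasurable h := (β.stronglyMeasurable.sub hgm).indicator hGm
  have hh2 : ∀ ω, ‖h ω‖ ≤ 2 * e := by
    intro ω
    by_cases hω : ω ∈ G
    · rw [hhG ω hω]
      calc ‖β ω - g ω‖ = ‖(β ω - N ω) + (N ω - g ω)‖ := by congr 1; abel
        _ ≤ ‖β ω - N ω‖ + ‖N ω - g ω‖ := norm_add_le _ _
        _ ≤ 2 * e := by linarith [(hG ω hω).2.2.2.1, (hN ω).2]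
    · rw [hhn ω hω, norm_zero]; positivity
  obtain ⟨I, hI, hIn⟩ := exists_op (μ := μ) hhm (by positivity) hh2
  obtain ⟨J, hJ⟩ := exists_J (𝕜 := 𝕜) (X := X) (μ := μ) hGm
  -- the norm of `T + I`
  have hSle : ∀ f : Lp X 1 μ, ‖(T + I) f‖ ≤ 1 * ‖f‖ := by
    intro f
    have hfI := L1.integrable_coeFn f
    have hJI := L1.integrable_coeFn (J f)
    have e1 : T (J f) = ∫ ω, g ω (J f ω) ∂μ := by
      apply hg
      filter_upwards [hJ f] with ω h1 h2
      rw [h1, Set.indicator_of_notMem]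
      intro hω
      exact h2 (hGs ω hω)
    have e2 : T (J f) + I f = ∫ ω, (g ω (J f ω) + h ω (f ω)) ∂μ := by
      rw [e1, hI, integral_add (integrable_app hgm hg1 hJI) (integrable_app hhm hh2 hfI)]
    have e3 : ‖T (J f) + I f‖ ≤ ∫ ω, ‖J f ω‖ ∂μ := by
      rw [e2]
      refine norm_integral_le_of_norm_le hJI.norm ?_
      filter_upwards [hJ f] with ω h1
      rw [h1]
      by_cases hω : ω ∈ G
      · rw [Set.indicator_of_mem hω, hhG ω hω, _root_.sub_apply, add_sub_cancel]
        simpa using (β ω).le_of_opNorm_le (hG ω hω).1 (f ω)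
      · rw [Set.indicator_of_notMem hω, hhn ω hω]; simp
    have e4 : ‖T (f - J f)‖ ≤ ∫ ω, ‖(f - J f : Lp X 1 μ) ω‖ ∂μ := by
      rw [← L1.norm_eq_integral_norm]
      simpa using T.le_of_opNorm_le hT.le (f - J f)
    have e5 : (∫ ω, ‖(f - J f : Lp X 1 μ) ω‖ ∂μ) + ∫ ω, ‖J f ω‖ ∂μ = ‖f‖ := by
      rw [← integral_add (L1.integrable_coeFn (f - J f)).norm hJI.norm, L1.norm_eq_integral_norm]
      apply integral_congr_ae
      filter_upwards [hJ f, Lp.coeFn_sub f (J f)] with ω h1 h2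
      rw [h2, Pi.sub_apply, h1]
      by_cases hω : ω ∈ G
      · rw [Set.indicator_of_mem hω]; simp
      · rw [Set.indicator_of_notMem hω]; simp
    have e6 : (T + I) f = T (f - J f) + (T (J f) + I f) := by
      rw [_root_.add_apply, map_sub]; abel
    rw [e6]
    refine (norm_add_le _ _).trans ?_
    linarith
  have hS1 : ‖T + I‖ ≤ 1 := ContinuousLinearMap.opNorm_le_bound _ zero_le_one hSle
  -- the new point
  let wL : Lp X 1 μ := (memLp_one_iff_integrable.2 hWI).toLp W
  have hwL : wL =ᵐ[μ] W := MemLp.coeFn_toLp _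
  have hm : ‖wL‖ = ∫ ω, ‖W ω‖ ∂μ := by
    rw [L1.norm_eq_integral_norm]
    apply integral_congr_ae
    filter_upwards [hwL] with ω h1
    rw [h1]
  have hSw : ry ((T + I) wL) = ‖wL‖ := by
    have e1 : (T + I) wL = ∫ ω, (g ω (W ω) + h ω (W ω)) ∂μ := by
      rw [_root_.add_apply, integral_add (integrable_app hgm hg1 hWI) (integrable_app hhm hh2 hWI),
        hI, hg]
      · congr 1 <;> apply integral_congr_ae <;> filter_upwards [hwL] with ω h1 <;> rw [h1]
      · filter_upwards [hwL] with ω h1 h2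
        rw [h1]
        apply hWn
        intro hω
        exact h2 (hGs ω hω)
    have i2 : Integrable (fun ω => g ω (W ω) + h ω (W ω)) μ :=
      (integrable_app hgm hg1 hWI).add (integrable_app hhm hh2 hWI)
    rw [e1, ← ry.integral_comp_comm i2, hm]
    congr 1
    ext ω
    by_cases hω : ω ∈ G
    · rw [hhG ω hω, _root_.sub_apply, add_sub_cancel, (hG ω hω).2.2.1, (hG ω hω).2.1]
    · rw [hWn ω hω]; simp
  have hD : η₁ / 2 * (‖sL‖ - ‖wL‖) ≤ ‖sL‖ - ry (T sL) := by
    have i1 : Integrable (fun ω => ry (g ω (s ω))) μ :=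
      ry.integrable_comp (integrable_app hgm hg1 hsI)
    rw [ha, hm, hTs, ← ry.integral_comp_comm (integrable_app hgm hg1 hsI),
      ← integral_sub hsI.norm hWI.norm, ← integral_sub hsI.norm i1, ← integral_const_mul]
    refine integral_mono ((hsI.norm.sub hWI.norm).const_mul _) (hsI.norm.sub i1) fun ω => ?_
    have hn := norm_nonneg (s ω)
    have hgs : ry (g ω (s ω)) ≤ ‖s ω‖ :=
      (hryle _).trans (by simpa using (g ω).le_of_opNorm_le (hg1 ω) (s ω))
    change η₁ / 2 * (‖s ω‖ - ‖W ω‖) ≤ ‖s ω‖ - ry (g ω (s ω))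
    by_cases hω : ω ∈ G
    · rw [(hG ω hω).2.1]; linarith
    · rw [hWn ω hω, norm_zero, sub_zero]
      by_cases h0 : s ω = 0
      · simp [h0]
      · have h1 : ry (N ω (s ω)) < (1 - η₁) * ‖s ω‖ := by
          by_contra hc
          exact hω (hGiff ω h0 (not_lt.1 hc))
        have h2 : ry ((g ω - N ω) (s ω)) ≤ δ * ‖s ω‖ :=
          (hryle _).trans ((g ω - N ω).le_of_opNorm_le
            (by rw [norm_sub_rev]; exact (hN ω).2) (s ω))
        rw [_root_.sub_apply, map_sub] at h2
        nlinarith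
  have hdist : ‖wL - sL‖ ≤ e * ‖sL‖ + (‖sL‖ - ‖wL‖) := by
    have i3 : Integrable (fun ω => ‖s ω‖ - ‖W ω‖) μ := hsI.norm.sub hWI.norm
    rw [L1.norm_eq_integral_norm (wL - sL), ha, hm, ← integral_sub hsI.norm hWI.norm,
      ← integral_const_mul, ← integral_add (hsI.norm.const_mul e) i3]
    refine integral_mono_ae (L1.integrable_coeFn _).norm
      ((hsI.norm.const_mul e).add i3) ?_
    filter_upwards [Lp.coeFn_sub wL sL, hwL, hsL] with ω h1 h2 h3
    rw [h1, Pi.sub_apply, h2, h3]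
    by_cases hω : ω ∈ G
    · rw [(hG ω hω).2.1]; linarith [(hG ω hω).2.2.2.2]
    · rw [hWn ω hω, zero_sub, norm_neg, norm_zero]
      have := mul_nonneg he.le (norm_nonneg (s ω))
      linarith
  have hws : ‖wL‖ ≤ ‖sL‖ := by
    rw [ha, hm]; exact integral_mono hWI.norm hsI.norm hWs
  have ha1 : ‖sL‖ < 1 + η := by
    have := norm_sub_norm_le sL x₀
    rw [norm_sub_rev] at this
    linarith
  have ha2 : 1 - η < ‖sL‖ := by
    have := norm_sub_norm_le x₀ sL
    linarith
  have hrT : 1 - 2 * η < ry (T sL) := by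
    have h1 : ry (T (x₀ - sL)) ≤ ‖x₀ - sL‖ :=
      (hryle _).trans (by simpa using T.le_of_opNorm_le hT.le (x₀ - sL))
    rw [map_sub, map_sub] at h1
    rw [← hry] at hTx
    linarith
  have ham : ‖sL‖ - ‖wL‖ ≤ e := by
    have : η₁ * (‖sL‖ - ‖wL‖) ≤ η₁ * e := by linarith
    exact le_of_mul_le_mul_left this hη₁
  have hm0 : 0 < ‖wL‖ := by linarith
  have hx1 : ‖((‖wL‖⁻¹ : ℝ) : 𝕜) • wL‖ = 1 := by
    rw [norm_smul, RCLike.norm_ofReal, abs_of_pos (inv_pos.2 hm0), inv_mul_cancel₀ hm0.ne']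
  have hSx1 : ry ((T + I) (((‖wL‖⁻¹ : ℝ) : 𝕜) • wL)) = 1 := by
    rw [hry, map_smul, map_smul, smul_eq_mul, RCLike.re_ofReal_mul, ← hry, hSw,
      inv_mul_cancel₀ hm0.ne']
  have hA : 1 ≤ ‖(T + I) (((‖wL‖⁻¹ : ℝ) : 𝕜) • wL)‖ := hSx1.symm.le.trans (hryle _)
  have hB : ‖(T + I) (((‖wL‖⁻¹ : ℝ) : 𝕜) • wL)‖ ≤ ‖T + I‖ := by
    have := (T + I).le_opNorm (((‖wL‖⁻¹ : ℝ) : 𝕜) • wL)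
    rwa [hx1, mul_one] at this
  have hx1w : ‖wL - ((‖wL‖⁻¹ : ℝ) : 𝕜) • wL‖ = |‖wL‖ - 1| := by
    have : wL - ((‖wL‖⁻¹ : ℝ) : 𝕜) • wL = ((1 - ‖wL‖⁻¹ : ℝ) : 𝕜) • wL := by
      push_cast; rw [sub_smul, one_smul]
    rw [this, norm_smul, RCLike.norm_ofReal]
    nth_rewrite 2 [← abs_of_pos hm0]
    rw [← abs_mul, sub_mul, inv_mul_cancel₀ hm0.ne', one_mul]
  have habs : |‖wL‖ - 1| ≤ 2 * e := abs_le.2 ⟨by linarith, by linarith⟩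
  refine ⟨T + I, ((‖wL‖⁻¹ : ℝ) : 𝕜) • wL, le_antisymm hS1 (hA.trans hB), hx1,
    le_antisymm (hB.trans hS1) hA, ?_, ?_⟩
  · have e1 : x₀ - ((‖wL‖⁻¹ : ℝ) : 𝕜) • wL =
        (x₀ - sL) + ((sL - wL) + (wL - ((‖wL‖⁻¹ : ℝ) : 𝕜) • wL)) := by abel
    rw [e1]
    have t1 := norm_add_le (x₀ - sL) ((sL - wL) + (wL - ((‖wL‖⁻¹ : ℝ) : 𝕜) • wL))
    have t2 := norm_add_le (sL - wL) (wL - ((‖wL‖⁻¹ : ℝ) : 𝕜) • wL)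
    rw [norm_sub_rev] at hdist
    nlinarith
  · rw [add_sub_cancel_left]
    linarith

lemma main_unif [FiniteDimensional 𝕜 X] [FiniteDimensional 𝕜 Y]
    [NormedSpace ℝ Y] [IsScalarTower ℝ 𝕜 Y] {ε : ℝ} (hε : 0 < ε) :
    ∃ η : ℝ, 0 < η ∧ ∀ T : Lp X 1 μ →L[𝕜] Y, ‖T‖ = 1 → ∀ x₀ : Lp X 1 μ, ‖x₀‖ = 1 →
      1 - η < ‖T x₀‖ → ∃ (S : Lp X 1 μ →L[𝕜] Y) (x₁ : Lp X 1 μ),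
        ‖S‖ = 1 ∧ ‖x₁‖ = 1 ∧ ‖S x₁‖ = 1 ∧ ‖x₀ - x₁‖ < ε ∧ ‖S - T‖ < ε := by
  have : ProperSpace (Y →L[𝕜] 𝕜) := FiniteDimensional.proper 𝕜 _
  obtain ⟨η, hη, h⟩ := (isCompact_closedBall (0 : Y →L[𝕜] 𝕜) 1).induction_on
    (p := fun K => ∃ η : ℝ, 0 < η ∧ ∀ y ∈ K, ∀ T : Lp X 1 μ →L[𝕜] Y, ‖T‖ = 1 →
      ∀ x₀ : Lp X 1 μ, ‖x₀‖ = 1 →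
      1 - η < RCLike.re (y (T x₀)) → ∃ (S : Lp X 1 μ →L[𝕜] Y) (x₁ : Lp X 1 μ),
        ‖S‖ = 1 ∧ ‖x₁‖ = 1 ∧ ‖S x₁‖ = 1 ∧ ‖x₀ - x₁‖ < ε ∧ ‖S - T‖ < ε)
    ⟨1, one_pos, by simp⟩
    (fun s t hst ⟨η, hη, h⟩ => ⟨η, hη, fun y hy => h y (hst hy)⟩)
    (fun s t ⟨η, hη, h⟩ ⟨η', hη', h'⟩ => ⟨min η η', lt_min hη hη', fun y hy T hT x₀ hx₀ hh => by
      rcases hy with hy | hy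
      · exact h y hy T hT x₀ hx₀ (by linarith [min_le_left η η'])
      · exact h' y hy T hT x₀ hx₀ (by linarith [min_le_right η η'])⟩)
    (fun y hy => by
      obtain ⟨η, hη, h⟩ := main_fixed (X := X) (μ := μ) y (by simpa using hy) hε
      refine ⟨Metric.ball y (η / 2), mem_nhdsWithin_of_mem_nhds (Metric.ball_mem_nhds y (by linarith)),
        η / 2, by linarith, fun y' hy' T hT x₀ hx₀ hh => h T hT x₀ hx₀ ?_⟩
      rw [Metric.mem_ball, dist_eq_norm] at hy'
      have h1 : ‖T x₀‖ ≤ 1 := by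
        have := T.le_opNorm x₀
        rwa [hT, hx₀, mul_one] at this
      have h2 : RCLike.re ((y' - y) (T x₀)) ≤ ‖y' - y‖ * 1 :=
        (RCLike.re_le_norm _).trans (((y' - y).le_opNorm _).trans (by gcongr))
      rw [_root_.sub_apply, map_sub] at h2
      linarith)
  refine ⟨η, hη, fun T hT x₀ hx₀ hh => ?_⟩
  obtain ⟨y, hy, hyT⟩ := exists_dual_vector'' 𝕜 (T x₀)
  refine h y (by simpa using hy) T hT x₀ hx₀ ?_
  rw [hyT]; simpa using hh

end

/-- If X and Y are finite-dimensional, then (L₁(μ, X), Y) has the BPBp for compact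
operators, for any measure μ. -/
theorem bpbp_compact_L1_finiteDimensional {𝕜 : Type*} [RCLike 𝕜] {X Y : Type*}
    [NormedAddCommGroup X] [NormedSpace 𝕜 X] [FiniteDimensional 𝕜 X]
    [NormedAddCommGroup Y] [NormedSpace 𝕜 Y] [FiniteDimensional 𝕜 Y]
    {Ω : Type*} [MeasurableSpace Ω] (μ : MeasureTheory.Measure Ω) :
    BPBpCompact 𝕜 (MeasureTheory.Lp X 1 μ) Y := by
  letI : NormedSpace ℝ Y := NormedSpace.restrictScalars ℝ 𝕜 Y
  haveI : IsScalarTower ℝ 𝕜 Y := RestrictScalars.isScalarTower ℝ 𝕜 Y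
  haveI : ProperSpace Y := FiniteDimensional.proper 𝕜 Y
  have hc : ∀ S : Lp X 1 μ →L[𝕜] Y, IsCompactOperator S := fun S =>
    ⟨Metric.closedBall 0 1, isCompact_closedBall 0 1,
      S.continuous.continuousAt.preimage_mem_nhds
        (by rw [map_zero]; exact Metric.closedBall_mem_nhds 0 one_pos)⟩
  choose η hη using fun (ε : ℝ) (hε : 0 < ε) =>
    main_unif (𝕜 := 𝕜) (X := X) (Y := Y) (μ := μ) hε
  classical
  refine ⟨fun ε => if h : 0 < ε then η ε h else 1, fun ε hε => ?_⟩
  simp only [dif_pos hε]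
  refine ⟨(hη ε hε).1, fun T _ hT x₀ hx₀ h => ?_⟩
  obtain ⟨S, x₁, h⟩ := (hη ε hε).2 T hT x₀ hx₀ h
  exact ⟨S, x₁, hc S, h⟩
end
end
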